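/- Let p_v = 2^{-𝒩_V(v)·(n+5)} for every vertex v ≠ s of 𝔅_n, and let π_0' be the twin policy of π_0. Then each of Bland(𝔇_n, π_0', 𝒩_{𝔇_n}), Dantzig(𝔇_n, π_0'), and LargestIncrease(𝔇_n, π_0') performs at least 2^n − 1 improving switches before terminating. -/

import Mathlib

/-! ## The Markov decision process `𝔅_n` -/

/-- Vertices of the MDP `𝔅_n`: a transportation vertex `t`, a sink `s`, a dummy vertex `d`,
and vertices `a i`, `b i` for `i ∈ {1,…,n}`. -/
inductive BV : Type where
  | t : BV
  | s : BV
  | d : BV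
  | a : ℕ → BV
  | b : ℕ → BV
deriving DecidableEq

/-- The vertex `a i` for `i ∈ {1,…,n+1}`, with the convention `a (n+1) = s`. -/
def aN (n i : ℕ) : BV := if i = n + 1 then BV.s else BV.a i

/-- The vertex `b i` for `i ∈ {1,…,n+1}`, with the convention `b (n+1) = d`. -/
def bN (n i : ℕ) : BV := if i = n + 1 then BV.d else BV.b i

/-- The vertex set of `𝔅_n`. -/
def IsBVertex (n : ℕ) : BV → Prop
  | BV.t => True
  | BV.s => True
  | BV.d => True
  | BV.a i => 1 ≤ i ∧ i ≤ n
  | BV.b i => 1 ≤ i ∧ i ≤ n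

/-- The edge relation of `𝔅_n`: travel, enter, skip, board, stay, leave edges,
the edge `(d,s)` and the self-loop `(s,s)`. -/
def BEdge (n : ℕ) (u v : BV) : Prop :=
  (∃ i, 1 ≤ i ∧ i ≤ n ∧ u = BV.t ∧ v = BV.a i) ∨
  (∃ i, 1 ≤ i ∧ i ≤ n ∧ u = BV.a i ∧ v = BV.b i) ∨
  (∃ i, 1 ≤ i ∧ i ≤ n ∧ u = BV.a i ∧ v = aN n (i + 1)) ∨
  (∃ i, 1 ≤ i ∧ i ≤ n ∧ u = BV.a i ∧ v = BV.t) ∨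
  (∃ i, 1 ≤ i ∧ i ≤ n ∧ u = BV.b i ∧ v = bN n (i + 1)) ∨
  (∃ i, 1 ≤ i ∧ i ≤ n ∧ u = BV.b i ∧ v = aN n (i + 1)) ∨
  (u = BV.d ∧ v = BV.s) ∨ (u = BV.s ∧ v = BV.s)

/-- The reward function of `𝔅_n`: `r(enter i) = 2^i`, `r(stay i) = 3/4`,
`r(board i) = -2^i + 5/4`, and reward `0` on all other edges. -/
def rB (n : ℕ) (u v : BV) : ℚ :=
  match u, v with
  | BV.a i, BV.b j => if i = j then 2 ^ i else 0
  | BV.a i, BV.t => -(2 ^ i) + 5 / 4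
  | BV.b i, BV.b j => if j = i + 1 then 3 / 4 else 0
  | BV.b i, BV.d => if i = n then 3 / 4 else 0
  | _, _ => 0

/-- A policy for `𝔅_n` chooses an outgoing edge at every vertex. -/
def IsBPolicy (n : ℕ) (π : BV → BV) : Prop := ∀ u, IsBVertex n u → BEdge n u (π u)

/-- A policy is weak unichain if it reaches the sink `s` from every vertex. -/
def BWeakUnichain (n : ℕ) (π : BV → BV) : Prop :=
  ∀ u, IsBVertex n u → ∃ k, π^[k] u = BV.s

open Classical in
/-- The value of a vertex `v` w.r.t. a (weak unichain) policy `π`: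
the sum of the rewards along the path that `π` takes from `v` to the sink `s`. -/
noncomputable def BVal (n : ℕ) (π : BV → BV) (v : BV) : ℚ :=
  if h : ∃ k, π^[k] v = BV.s then
    ∑ i ∈ Finset.range (Nat.find h), rB n (π^[i] v) (π^[i + 1] v)
  else 0

/-- The reduced costs of the edge `(u,v)` w.r.t. the policy `π`. -/
noncomputable def zB (n : ℕ) (π : BV → BV) (u v : BV) : ℚ :=
  rB n u v + BVal n π v - BVal n π u

/-- The edge `(u,v)` is an improving switch for `π` if its reduced costs are positive. -/
def BImproving (n : ℕ) (π : BV → BV) (u v : BV) : Prop :=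
  BEdge n u v ∧ 0 < zB n π u v

/-- The Bland numbering `𝒩_{𝔅_n}` of the edges of `𝔅_n`. -/
def NB (n : ℕ) (u v : BV) : ℕ :=
  match u, v with
  | BV.t, BV.a i => i
  | BV.a i, BV.b _ => n + 1 + 5 * (i - 1)
  | BV.a i, BV.a _ => n + 2 + 5 * (i - 1)
  | BV.a i, BV.s => n + 2 + 5 * (i - 1)
  | BV.a i, BV.t => n + 3 + 5 * (i - 1)
  | BV.b i, BV.b _ => n + 4 + 5 * (i - 1)
  | BV.b i, BV.d => n + 4 + 5 * (i - 1)
  | BV.b i, BV.a _ => n + 5 + 5 * (i - 1)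
  | BV.b i, BV.s => n + 5 + 5 * (i - 1)
  | BV.d, BV.s => 6 * n + 1
  | BV.s, BV.s => 6 * n + 2
  | _, _ => 0

/-- One step of Bland's policy iteration with edge numbering `N`:
apply the improving switch with the smallest number. -/
def IsBlandStep (n : ℕ) (N : BV → BV → ℕ) (π π' : BV → BV) : Prop :=
  ∃ u v, BImproving n π u v ∧ (∀ u' v', BImproving n π u' v' → N u v ≤ N u' v') ∧
    π' = Function.update π u v

/-- `BlandReaches n N π ψ` says that Bland's policy iteration started at `π` visits `ψ`. -/
def BlandReaches (n : ℕ) (N : BV → BV → ℕ) : (BV → BV) → (BV → BV) → Prop :=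
  Relation.ReflTransGen (IsBlandStep n N)

/-- The canonical policy `π_0` for `0`: `travel 1`, `skip i` and `leave i` are active. -/
def pi0 (n : ℕ) : BV → BV := fun u =>
  match u with
  | BV.t => BV.a 1
  | BV.a i => aN n (i + 1)
  | BV.b i => aN n (i + 1)
  | BV.d => BV.s
  | BV.s => BV.s

/-- The optimal policy `π_*`: `travel 1`, `enter i` for all `i`, `leave j` for `j < n`,
and `stay n` are active. -/
def piStar (n : ℕ) : BV → BV := fun u =>
  match u with
  | BV.t => BV.a 1
  | BV.a i => BV.b i
  | BV.b i => if i = n then BV.d else BV.a (i + 1)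
  | BV.d => BV.s
  | BV.s => BV.s

/-! ## Bits and canonical policies -/

/-- The least significant set bit `ℓ_1(x)` (1-based). -/
noncomputable def lsb (x : ℕ) : ℕ := sInf {i | 1 ≤ i ∧ Nat.testBit x (i - 1)}

/-- The most significant set bit `m(x)` (1-based). -/
noncomputable def msb1 (x : ℕ) : ℕ := sSup {i | 1 ≤ i ∧ Nat.testBit x (i - 1)}

/-- The least unset bit `ℓ_0(x)` (1-based). -/
noncomputable def lzero (x : ℕ) : ℕ := sInf {i | 1 ≤ i ∧ ¬ Nat.testBit x (i - 1)}

/-- `L_i(x) = max { j ≤ i-2 | x_j = 1 or j = 1 }` (1-based bits). -/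
noncomputable def Lfun (i x : ℕ) : ℕ :=
  sSup {j | 1 ≤ j ∧ j ≤ i - 2 ∧ (Nat.testBit x (j - 1) ∨ j = 1)}

/-- `IsCanonical n x π` says that `π` is the canonical policy `π_x` for `x`. -/
noncomputable def IsCanonical (n x : ℕ) (π : BV → BV) : Prop :=
  IsBPolicy n π ∧
  if x = 0 then
    π BV.t = BV.a 1 ∧
      ∀ i, 1 ≤ i → i ≤ n → π (BV.a i) = aN n (i + 1) ∧ π (BV.b i) = aN n (i + 1)
  else
    π BV.t = BV.a (lsb x) ∧
    π (BV.b (msb1 x)) = aN n (msb1 x + 1) ∧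
    (∀ i, msb1 x < i → i ≤ n → π (BV.a i) = aN n (i + 1) ∧ π (BV.b i) = aN n (i + 1)) ∧
    ∀ i, 1 ≤ i → i ≤ n → Nat.testBit x (i - 1) →
      π (BV.a i) = BV.b i ∧
      (i = 2 → π (BV.b 1) = BV.a 2 ∧ (¬ Nat.testBit x 0 → π (BV.a 1) = BV.a 2)) ∧
      (3 ≤ i → Nat.testBit x (i - 2) → π (BV.b (i - 1)) = BV.a i) ∧
      (3 ≤ i → ¬ Nat.testBit x (i - 2) →
        π (BV.b (i - 1)) = BV.b i ∧ π (BV.a (i - 1)) = BV.a i ∧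
        π (BV.b (i - 2)) = BV.a (i - 1) ∧
        (Lfun i x < i - 2 →
          ∀ j, Lfun i x + 1 ≤ j → j ≤ i - 2 →
            π (BV.a j) = BV.t ∧ π (BV.b (j - 1)) = BV.b j) ∧
        (Lfun i x = 1 → ¬ Nat.testBit x 0 → π (BV.a 1) = BV.t))

/-- Activating a list of edges in a policy, from left to right. -/
def activateList (π : BV → BV) (L : List (BV × BV)) : BV → BV :=
  L.foldl (fun σ e => Function.update σ e.1 e.2) π

/-- The canonical phases w.r.t. an odd number `x` (with `ℓ := ℓ_0(x)`), as a list of edges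
to be activated in order. -/
noncomputable def phaseList (n x : ℕ) : List (BV × BV) :=
  let ℓ := lzero x
  (if Nat.testBit x ℓ then [(BV.b ℓ, aN n (ℓ + 1))] else []) ++
  (if Nat.testBit x ℓ ∨ msb1 x < ℓ then [(BV.b (ℓ - 1), BV.b ℓ)] else []) ++
  [(BV.a ℓ, BV.b ℓ), (BV.t, BV.a ℓ)] ++
  ((List.range (ℓ - 2)).map fun j => (BV.a (j + 1), BV.t)) ++
  [(BV.a (ℓ - 1), BV.a ℓ)] ++
  (((List.range (ℓ - 3)).reverse).map fun j => (BV.b (j + 1), BV.b (j + 2))) ++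
  (if ℓ = 2 then [(BV.b 1, BV.a 2)] else [])

/-! ## The Markov decision process `𝔇_n` -/

/-- Vertices of `𝔇_n`: the original vertices (`base`), and for every edge `(v,w)` of `𝔅_n`
other than the self-loop, the gadget vertices `x v w`, `y v w`, `z v w`. -/
inductive DV : Type where
  | base : BV → DV
  | x : BV → BV → DV
  | y : BV → BV → DV
  | z : BV → BV → DV
deriving DecidableEq

/-- The edges of `𝔅_n` that get replaced by gadgets (all edges except the self-loop `(s,s)`). -/
def DEdgePair (n : ℕ) (v w : BV) : Prop := BEdge n v w ∧ v ≠ BV.s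

/-- The vertex set of `𝔇_n`. -/
def IsDVertex (n : ℕ) : DV → Prop
  | DV.base v => IsBVertex n v
  | DV.x v w => DEdgePair n v w
  | DV.y v w => DEdgePair n v w
  | DV.z v w => DEdgePair n v w

/-- The agent vertices of `𝔇_n` (all vertices except the randomization vertices `y v w`). -/
def IsDAgent (n : ℕ) : DV → Prop
  | DV.base v => IsBVertex n v
  | DV.x v w => DEdgePair n v w
  | DV.y _ _ => False
  | DV.z v w => DEdgePair n v w

/-- The agent edges of `𝔇_n`. -/
def DEdge (n : ℕ) (u u' : DV) : Prop :=
  (∃ v w, DEdgePair n v w ∧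
    ((u = DV.base v ∧ u' = DV.x v w) ∨ (u = DV.x v w ∧ u' = DV.base v) ∨
     (u = DV.x v w ∧ u' = DV.y v w) ∨ (u = DV.z v w ∧ u' = DV.base w))) ∨
  (u = DV.base BV.s ∧ u' = DV.base BV.s)

/-- The reward function of `𝔇_n`: the edge `(z v w, w)` carries the reward of the original
edge `(v,w)`; all other agent edges have reward `0`. -/
def rD (n : ℕ) (u u' : DV) : ℚ :=
  match u, u' with
  | DV.z v w, DV.base w' => if w' = w then rB n v w else 0
  | _, _ => 0

/-- A policy for `𝔇_n` chooses an outgoing agent edge at every agent vertex. -/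
def IsDPolicy (n : ℕ) (π : DV → DV) : Prop := ∀ u, IsDAgent n u → DEdge n u (π u)

/-- `IsDVal n p π V` says that `V` satisfies the Bellman equations characterizing the value
function of the policy `π` for `𝔇_n` with probabilities `p`, with `V s = 0`. -/
def IsDVal (n : ℕ) (p : BV → ℚ) (π : DV → DV) (V : DV → ℚ) : Prop :=
  V (DV.base BV.s) = 0 ∧
  (∀ u, IsDAgent n u → V u = rD n u (π u) + V (π u)) ∧
  (∀ v w, DEdgePair n v w →
    V (DV.y v w) = p v * V (DV.z v w) + (1 - p v) * V (DV.base v))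

open Classical in
/-- The value function of a (weak unichain) policy `π` for `𝔇_n`: the unique solution of the
Bellman equations (normalized to `0` outside the vertex set). -/
noncomputable def DVal (n : ℕ) (p : BV → ℚ) (π : DV → DV) : DV → ℚ :=
  if h : ∃! V : DV → ℚ, IsDVal n p π V ∧ ∀ u, ¬ IsDVertex n u → V u = 0 then
    h.exists.choose
  else fun _ => 0

/-- The reduced costs of an agent edge `(u,u')` of `𝔇_n` w.r.t. the policy `π`. -/
noncomputable def zD (n : ℕ) (p : BV → ℚ) (π : DV → DV) (u u' : DV) : ℚ :=
  rD n u u' + DVal n p π u' - DVal n p π u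

/-- An agent edge of `𝔇_n` is an improving switch if its reduced costs are positive. -/
def DImproving (n : ℕ) (p : BV → ℚ) (π : DV → DV) (u u' : DV) : Prop :=
  DEdge n u u' ∧ 0 < zD n p π u u'

/-- One (agent or positive-probability randomization) step of the process `𝔇_n` under `π`. -/
def DStep (n : ℕ) (p : BV → ℚ) (π : DV → DV) (u u' : DV) : Prop :=
  (IsDAgent n u ∧ u' = π u) ∨
  (∃ v w, DEdgePair n v w ∧ u = DV.y v w ∧
    ((u' = DV.z v w ∧ 0 < p v) ∨ (u' = DV.base v ∧ 0 < 1 - p v)))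

/-- A policy for `𝔇_n` is weak unichain if it reaches `s` with probability one from every
vertex, i.e. `s` is reachable via active/positive-probability steps from every vertex. -/
def DWeakUnichain (n : ℕ) (p : BV → ℚ) (π : DV → DV) : Prop :=
  ∀ u, IsDVertex n u → Relation.ReflTransGen (DStep n p π) u (DV.base BV.s)

/-- The twin policy of a policy `π` for `𝔅_n`: every vertex `v ≠ s` is `π v`-oriented. -/
def twin (π : BV → BV) : DV → DV := fun u =>
  match u with
  | DV.base v => if v = BV.s then DV.base BV.s else DV.x v (π v)
  | DV.x v w => if w = π v then DV.y v w else DV.base v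
  | DV.y v w => DV.y v w
  | DV.z _ w => DV.base w

/-- The vertex numbering `𝒩_V` of `𝔅_n`: the order `(t, a 1, b 1, a 2, b 2, …, a n, b n, d, s)`. -/
def NV (n : ℕ) : BV → ℕ
  | BV.t => 1
  | BV.a i => 2 * i
  | BV.b i => 2 * i + 1
  | BV.d => 2 * n + 2
  | BV.s => 2 * n + 3

/-- The specific probabilities `p_v = 2^{-𝒩_V(v)·(n+5)}`. -/
noncomputable def pSpec (n : ℕ) (v : BV) : ℚ := (2 : ℚ) ^ (-((NV n v * (n + 5) : ℕ) : ℤ))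

/-- The set `B(v)` of agent edges of `𝔇_n` belonging to the vertex `v`. -/
def Belongs (n : ℕ) (v : BV) (e : DV × DV) : Prop :=
  ∃ w, DEdgePair n v w ∧
    (e = (DV.x v w, DV.y v w) ∨ e = (DV.base v, DV.x v w) ∨ e = (DV.x v w, DV.base v))

/-- Applying the improving switch `e` to the policy `π` yields `π'`. -/
def DApply (n : ℕ) (p : BV → ℚ) (π : DV → DV) (e : DV × DV) (π' : DV → DV) : Prop :=
  DImproving n p π e.1 e.2 ∧ π' = Function.update π e.1 e.2

/-- One step of Bland's policy iteration on `𝔇_n` with edge numbering `N`. -/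
def IsBlandStepD (n : ℕ) (p : BV → ℚ) (N : DV → DV → ℕ) (π π' : DV → DV) : Prop :=
  ∃ u u', DImproving n p π u u' ∧ (∀ a b, DImproving n p π a b → N u u' ≤ N a b) ∧
    π' = Function.update π u u'

/-- One step of Dantzig's policy iteration on `𝔇_n`: apply an improving switch of maximal
reduced costs. -/
def DantzigStep (n : ℕ) (p : BV → ℚ) (π π' : DV → DV) : Prop :=
  ∃ u u', DImproving n p π u u' ∧
    (∀ a b, DImproving n p π a b → zD n p π a b ≤ zD n p π u u') ∧
    π' = Function.update π u u'

/-- The finite set of vertices of `𝔅_n`, as a `Finset`. -/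
noncomputable def BVSet (n : ℕ) : Finset BV :=
  {BV.t, BV.d, BV.s} ∪ (Finset.Icc 1 n).image BV.a ∪ (Finset.Icc 1 n).image BV.b

/-- The finite set of agent vertices of `𝔇_n`, as a `Finset`. -/
noncomputable def DAgentSet (n : ℕ) : Finset DV := by
  classical
  exact ((BVSet n).image DV.base) ∪
    (((BVSet n ×ˢ BVSet n).filter fun e => DEdgePair n e.1 e.2).image fun e => DV.x e.1 e.2) ∪
    (((BVSet n ×ˢ BVSet n).filter fun e => DEdgePair n e.1 e.2).image fun e => DV.z e.1 e.2)

/-- The objective of the Largest Increase rule: the sum of the values of all agent vertices. -/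
noncomputable def LIobj (n : ℕ) (p : BV → ℚ) (π : DV → DV) : ℚ :=
  ∑ u ∈ DAgentSet n, DVal n p π u

/-- One step of the Largest Increase policy iteration on `𝔇_n`: apply an improving switch
maximizing the sum of all agent vertex values of the resulting policy. -/
def LIStep (n : ℕ) (p : BV → ℚ) (π π' : DV → DV) : Prop :=
  ∃ u u', DImproving n p π u u' ∧
    (∀ a b, DImproving n p π a b →
      LIobj n p (Function.update π a b) ≤ LIobj n p (Function.update π u u')) ∧
    π' = Function.update π u u'

/-- `N` is a Bland numbering `𝒩_{𝔇_n}` for `𝔇_n`: it is injective on agent edges, the edges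
`(x v w, v)` all come first, within each gadget `(x v w, y v w)` precedes `(v, x v w)`,
the gadget blocks are ordered according to `𝒩_{𝔅_n}`, and the self-loop comes last. -/
def IsDBlandNumbering (n : ℕ) (N : DV → DV → ℕ) : Prop :=
  (∀ u₁ u₂ u₁' u₂', DEdge n u₁ u₂ → DEdge n u₁' u₂' → N u₁ u₂ = N u₁' u₂' →
    u₁ = u₁' ∧ u₂ = u₂') ∧
  (∀ v w v' w', DEdgePair n v w → DEdgePair n v' w' →
    N (DV.x v w) (DV.base v) < N (DV.x v' w') (DV.y v' w')) ∧
  (∀ v w, DEdgePair n v w → N (DV.x v w) (DV.y v w) < N (DV.base v) (DV.x v w)) ∧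
  (∀ v w v' w', DEdgePair n v w → DEdgePair n v' w' → NB n v w < NB n v' w' →
    N (DV.base v) (DV.x v w) < N (DV.x v' w') (DV.y v' w')) ∧
  (∀ v w, DEdgePair n v w → N (DV.base v) (DV.x v w) < N (DV.base BV.s) (DV.base BV.s))

/-! ### Basic facts about `𝔅_n` -/

/-- Reduced costs w.r.t. an abstract value function. -/
def zV (n : ℕ) (V : BV → ℚ) (u w : BV) : ℚ := rB n u w + V w - V u

/-- No improving switch at `u`. -/
def OptAt (n : ℕ) (V : BV → ℚ) (u : BV) : Prop := ∀ w, BEdge n u w → zV n V u w ≤ 0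

/-- Potential function. -/
def cpot (n : ℕ) : BV → ℚ
  | BV.t => 0
  | BV.a i => 2 ^ i - 2
  | BV.b i => 2 ^ (i + 1) - 2
  | BV.d => 2 ^ (n + 1) - 5 / 4
  | BV.s => 2 ^ (n + 1) - 5 / 4

theorem aN_top (n : ℕ) : aN n (n + 1) = BV.s := by simp [aN]
theorem bN_top (n : ℕ) : bN n (n + 1) = BV.d := by simp [bN]
theorem aN_le {n i : ℕ} (h : i ≤ n) : aN n i = BV.a i := by
  have : i ≠ n + 1 := by omega
  simp [aN, this]
theorem bN_le {n i : ℕ} (h : i ≤ n) : bN n i = BV.b i := by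
  have : i ≠ n + 1 := by omega
  simp [bN, this]

theorem rB_ta (n i : ℕ) : rB n BV.t (BV.a i) = 0 := rfl
theorem rB_ab (n i : ℕ) : rB n (BV.a i) (BV.b i) = 2 ^ i := by simp [rB]
theorem rB_at (n i : ℕ) : rB n (BV.a i) BV.t = -(2 ^ i) + 5 / 4 := rfl
theorem rB_aa (n i j : ℕ) : rB n (BV.a i) (aN n j) = 0 := by
  unfold aN; split_ifs <;> rfl
theorem rB_ba (n i j : ℕ) : rB n (BV.b i) (aN n j) = 0 := by
  unfold aN; split_ifs <;> rfl
theorem rB_bb (n i : ℕ) : rB n (BV.b i) (bN n (i + 1)) = 3 / 4 := by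
  unfold bN; split_ifs with h
  · have : i = n := by omega
    simp [rB, this]
  · simp [rB]

theorem BEdge.elim {n : ℕ} {P : BV → BV → Prop} {u w : BV} (h : BEdge n u w)
    (h1 : ∀ i, 1 ≤ i → i ≤ n → P BV.t (BV.a i))
    (h2 : ∀ i, 1 ≤ i → i ≤ n → P (BV.a i) (BV.b i))
    (h3 : ∀ i, 1 ≤ i → i ≤ n → P (BV.a i) (aN n (i + 1)))
    (h4 : ∀ i, 1 ≤ i → i ≤ n → P (BV.a i) BV.t)
    (h5 : ∀ i, 1 ≤ i → i ≤ n → P (BV.b i) (bN n (i + 1)))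
    (h6 : ∀ i, 1 ≤ i → i ≤ n → P (BV.b i) (aN n (i + 1)))
    (h7 : P BV.d BV.s) (h8 : P BV.s BV.s) : P u w := by
  rcases h with ⟨i, a, b, rfl, rfl⟩ | ⟨i, a, b, rfl, rfl⟩ | ⟨i, a, b, rfl, rfl⟩ |
    ⟨i, a, b, rfl, rfl⟩ | ⟨i, a, b, rfl, rfl⟩ | ⟨i, a, b, rfl, rfl⟩ | ⟨rfl, rfl⟩ | ⟨rfl, rfl⟩
  · exact h1 i a b
  · exact h2 i a b
  · exact h3 i a b
  · exact h4 i a b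
  · exact h5 i a b
  · exact h6 i a b
  · exact h7
  · exact h8

theorem edge_ta {n i : ℕ} (h : 1 ≤ i) (h' : i ≤ n) : BEdge n BV.t (BV.a i) :=
  Or.inl ⟨i, h, h', rfl, rfl⟩
theorem edge_ab {n i : ℕ} (h : 1 ≤ i) (h' : i ≤ n) : BEdge n (BV.a i) (BV.b i) :=
  Or.inr (Or.inl ⟨i, h, h', rfl, rfl⟩)
theorem edge_aa {n i : ℕ} (h : 1 ≤ i) (h' : i ≤ n) : BEdge n (BV.a i) (aN n (i + 1)) :=
  Or.inr (Or.inr (Or.inl ⟨i, h, h', rfl, rfl⟩))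
theorem edge_at {n i : ℕ} (h : 1 ≤ i) (h' : i ≤ n) : BEdge n (BV.a i) BV.t :=
  Or.inr (Or.inr (Or.inr (Or.inl ⟨i, h, h', rfl, rfl⟩)))
theorem edge_bb {n i : ℕ} (h : 1 ≤ i) (h' : i ≤ n) : BEdge n (BV.b i) (bN n (i + 1)) :=
  Or.inr (Or.inr (Or.inr (Or.inr (Or.inl ⟨i, h, h', rfl, rfl⟩))))
theorem edge_ba {n i : ℕ} (h : 1 ≤ i) (h' : i ≤ n) : BEdge n (BV.b i) (aN n (i + 1)) :=
  Or.inr (Or.inr (Or.inr (Or.inr (Or.inr (Or.inl ⟨i, h, h', rfl, rfl⟩)))))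
theorem edge_ds (n : ℕ) : BEdge n BV.d BV.s :=
  Or.inr (Or.inr (Or.inr (Or.inr (Or.inr (Or.inr (Or.inl ⟨rfl, rfl⟩))))))
theorem edge_ss (n : ℕ) : BEdge n BV.s BV.s :=
  Or.inr (Or.inr (Or.inr (Or.inr (Or.inr (Or.inr (Or.inr ⟨rfl, rfl⟩))))))

theorem vert_aN {n i : ℕ} (h : 1 ≤ i) (h' : i ≤ n + 1) : IsBVertex n (aN n i) := by
  unfold aN; split_ifs with h0
  · trivial
  · exact ⟨h, by omega⟩
theorem vert_bN {n i : ℕ} (h : 1 ≤ i) (h' : i ≤ n + 1) : IsBVertex n (bN n i) := by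
  unfold bN; split_ifs with h0
  · trivial
  · exact ⟨h, by omega⟩

theorem BEdge.src {n : ℕ} {u w : BV} (h : BEdge n u w) : IsBVertex n u := by
  refine BEdge.elim (P := fun u _ => IsBVertex n u) h ?_ ?_ ?_ ?_ ?_ ?_ trivial trivial <;>
    intro i h1 h2 <;> trivial

theorem BEdge.tgt {n : ℕ} {u w : BV} (h : BEdge n u w) : IsBVertex n w := by
  refine BEdge.elim (P := fun _ u => IsBVertex n u) h ?_ ?_ ?_ ?_ ?_ ?_ trivial trivial <;>
    intro i h1 h2
  · exact ⟨h1, h2⟩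
  · exact ⟨h1, h2⟩
  · exact vert_aN (by omega) (by omega)
  · trivial
  · exact vert_bN (by omega) (by omega)
  · exact vert_aN (by omega) (by omega)

theorem BEdge.from_t {n : ℕ} {w : BV} (h : BEdge n BV.t w) :
    ∃ i, 1 ≤ i ∧ i ≤ n ∧ w = BV.a i := by
  rcases h with ⟨i, a, b, h, rfl⟩ | ⟨i, a, b, h, rfl⟩ | ⟨i, a, b, h, rfl⟩ |
    ⟨i, a, b, h, rfl⟩ | ⟨i, a, b, h, rfl⟩ | ⟨i, a, b, h, rfl⟩ | ⟨h, rfl⟩ | ⟨h, rfl⟩ <;> cases h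
  exact ⟨i, a, b, rfl⟩

theorem BEdge.from_a {n i : ℕ} {w : BV} (h : BEdge n (BV.a i) w) :
    1 ≤ i ∧ i ≤ n ∧ (w = BV.b i ∨ w = aN n (i + 1) ∨ w = BV.t) := by
  rcases h with ⟨i, a, b, h, rfl⟩ | ⟨i, a, b, h, rfl⟩ | ⟨i, a, b, h, rfl⟩ |
    ⟨i, a, b, h, rfl⟩ | ⟨i, a, b, h, rfl⟩ | ⟨i, a, b, h, rfl⟩ | ⟨h, rfl⟩ | ⟨h, rfl⟩ <;> cases h <;>
    simp [*]

theorem BEdge.from_b {n i : ℕ} {w : BV} (h : BEdge n (BV.b i) w) :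
    1 ≤ i ∧ i ≤ n ∧ (w = bN n (i + 1) ∨ w = aN n (i + 1)) := by
  rcases h with ⟨i, a, b, h, rfl⟩ | ⟨i, a, b, h, rfl⟩ | ⟨i, a, b, h, rfl⟩ |
    ⟨i, a, b, h, rfl⟩ | ⟨i, a, b, h, rfl⟩ | ⟨i, a, b, h, rfl⟩ | ⟨h, rfl⟩ | ⟨h, rfl⟩ <;> cases h <;>
    simp [*]

theorem BEdge.from_d {n : ℕ} {w : BV} (h : BEdge n BV.d w) : w = BV.s := by
  rcases h with ⟨i, a, b, h, rfl⟩ | ⟨i, a, b, h, rfl⟩ | ⟨i, a, b, h, rfl⟩ |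
    ⟨i, a, b, h, rfl⟩ | ⟨i, a, b, h, rfl⟩ | ⟨i, a, b, h, rfl⟩ | ⟨h, rfl⟩ | ⟨h, rfl⟩ <;> cases h
  rfl

theorem BEdge.from_s {n : ℕ} {w : BV} (h : BEdge n BV.s w) : w = BV.s := by
  rcases h with ⟨i, a, b, h, rfl⟩ | ⟨i, a, b, h, rfl⟩ | ⟨i, a, b, h, rfl⟩ |
    ⟨i, a, b, h, rfl⟩ | ⟨i, a, b, h, rfl⟩ | ⟨i, a, b, h, rfl⟩ | ⟨h, rfl⟩ | ⟨h, rfl⟩ <;> cases h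
  rfl

theorem cpot_aN {n i : ℕ} (h' : i ≤ n + 1) : (2:ℚ) ^ i - 2 ≤ cpot n (aN n i) := by
  unfold aN; split_ifs with h0
  · subst h0; simp only [cpot]; linarith
  · simp [cpot]

theorem rB_le_cpot {n : ℕ} {u w : BV} (h : BEdge n u w) : rB n u w ≤ cpot n w - cpot n u := by
  have key : ∀ i, 1 ≤ i → (2:ℚ) ≤ 2 ^ i := fun i hi => by
    calc (2:ℚ) = 2 ^ 1 := by norm_num
      _ ≤ 2 ^ i := pow_le_pow_right₀ (by norm_num) hi
  refine BEdge.elim (P := fun u w => rB n u w ≤ cpot n w - cpot n u) h ?_ ?_ ?_ ?_ ?_ ?_ ?_ ?_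
  · intro i h1 h2; rw [rB_ta]; simp only [cpot]; linarith [key i h1]
  · intro i h1 h2; rw [rB_ab]; simp only [cpot]; rw [pow_succ]; linarith
  · intro i h1 h2; rw [rB_aa]
    have := cpot_aN (n := n) (i := i + 1) (by omega)
    have hc : cpot n (BV.a i) = 2 ^ i - 2 := rfl
    rw [hc]; rw [pow_succ] at this; linarith [key i h1]
  · intro i h1 h2; rw [rB_at]; simp only [cpot]; linarith
  · intro i h1 h2; rw [rB_bb]; unfold bN; split_ifs with h0
    · have : i = n := by omega
      subst this; simp only [cpot]; linarith
    · simp only [cpot]; rw [pow_succ _ (i + 1), pow_succ]; linarith [key i h1]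
  · intro i h1 h2; rw [rB_ba]
    have := cpot_aN (n := n) (i := i + 1) (by omega)
    have hc : cpot n (BV.b i) = 2 ^ (i + 1) - 2 := rfl
    rw [hc]; linarith
  · simp [rB, cpot]
  · simp [rB]

theorem rB_quarter (n : ℕ) (u w : BV) : ∃ m : ℤ, rB n u w = m / 4 := by
  unfold rB
  split
  · rename_i i j
    split_ifs
    · exact ⟨4 * 2 ^ i, by push_cast; ring⟩
    · exact ⟨0, by simp⟩
  · rename_i i
    exact ⟨-(4 * 2 ^ i) + 5, by push_cast; ring⟩
  · split_ifs
    · exact ⟨3, by norm_num⟩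
    · exact ⟨0, by simp⟩
  · split_ifs
    · exact ⟨3, by norm_num⟩
    · exact ⟨0, by simp⟩
  · exact ⟨0, by simp⟩

/-- `σ` reaches the sink from a vertex. -/
inductive Reaches (σ : BV → BV) : BV → Prop
  | base : Reaches σ BV.s
  | step (u : BV) : Reaches σ (σ u) → Reaches σ u

/-- A weak unichain policy with its (nonnegative) value function. -/
structure BS (n : ℕ) (σ : BV → BV) (V : BV → ℚ) : Prop where
  pol : ∀ u, IsBVertex n u → BEdge n u (σ u)
  reach : ∀ u, IsBVertex n u → Reaches σ u
  vs : V BV.s = 0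
  bell : ∀ u, IsBVertex n u → V u = rB n u (σ u) + V (σ u)
  nonneg : ∀ u, IsBVertex n u → 0 ≤ V u

/-- The path from `u` passes `v`. -/
def Pass (σ : BV → BV) (v u : BV) : Prop := ∃ k : ℕ, σ^[k] u = v

theorem Pass.self (σ : BV → BV) (v : BV) : Pass σ v v := ⟨0, rfl⟩

theorem pass_step {σ : BV → BV} {v u : BV} (h : u ≠ v) : Pass σ v u ↔ Pass σ v (σ u) := by
  constructor
  · rintro ⟨k, hk⟩
    cases k with
    | zero => exact absurd hk h
    | succ k => exact ⟨k, by simpa using hk⟩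
  · rintro ⟨k, hk⟩
    exact ⟨k + 1, by simpa using hk⟩

theorem Reaches.pass {σ : BV → BV} {u : BV} (h : Reaches σ u) : Pass σ BV.s u := by
  induction h with
  | base => exact Pass.self _ _
  | step u _ ih => obtain ⟨k, hk⟩ := ih; exact ⟨k + 1, by simpa using hk⟩

namespace BS
variable {n : ℕ} {σ : BV → BV} {V : BV → ℚ}

theorem sig_s (B : BS n σ V) : σ BV.s = BV.s := (B.pol BV.s trivial).from_s
theorem sig_d (B : BS n σ V) : σ BV.d = BV.s := (B.pol BV.d trivial).from_d
theorem vd (B : BS n σ V) : V BV.d = 0 := by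
  rw [B.bell BV.d trivial, B.sig_d, B.vs]; simp [rB]
theorem vtx (B : BS n σ V) {u : BV} (h : IsBVertex n u) : IsBVertex n (σ u) := (B.pol u h).tgt

theorem quarter (B : BS n σ V) {u : BV} (h : IsBVertex n u) : ∃ m : ℤ, V u = m / 4 := by
  have hr := B.reach u h
  induction hr with
  | base => exact ⟨0, by simp [B.vs]⟩
  | step u _ ih =>
    obtain ⟨m, hm⟩ := ih (B.vtx h)
    obtain ⟨k, hk⟩ := rB_quarter n u (σ u)
    exact ⟨k + m, by rw [B.bell u h, hm, hk]; push_cast; ring⟩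

theorem z_quarter (B : BS n σ V) {u w : BV} (h : BEdge n u w) : ∃ m : ℤ, zV n V u w = m / 4 := by
  obtain ⟨a, ha⟩ := rB_quarter n u w
  obtain ⟨b, hb⟩ := B.quarter h.tgt
  obtain ⟨c, hc⟩ := B.quarter h.src
  exact ⟨a + b - c, by unfold zV; rw [ha, hb, hc]; push_cast; ring⟩

theorem z_pos (B : BS n σ V) {u w : BV} (h : BEdge n u w) (hz : 0 < zV n V u w) :
    1 / 4 ≤ zV n V u w := by
  obtain ⟨m, hm⟩ := B.z_quarter h
  rw [hm] at hz ⊢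
  have : (0:ℚ) < m := by linarith
  have : (0:ℤ) < m := by exact_mod_cast this
  have : (1:ℤ) ≤ m := by omega
  have : (1:ℚ) ≤ m := by exact_mod_cast this
  linarith

theorem path (B : BS n σ V) {v : BV} (k : ℕ) : ∀ {u : BV}, IsBVertex n u → σ^[k] u = v →
    V u ≤ cpot n v - cpot n u + V v := by
  induction k with
  | zero => rintro u _ rfl; simp
  | succ k ih =>
    intro u hu hk
    have h1 := ih (B.vtx hu) (by simpa using hk)
    have h2 := rB_le_cpot (B.pol u hu)
    rw [B.bell u hu]; linarith

theorem pass_le (B : BS n σ V) {v u : BV} (hu : IsBVertex n u) (h : Pass σ v u) :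
    V u ≤ cpot n v - cpot n u + V v := by
  obtain ⟨k, hk⟩ := h; exact B.path k hu hk

theorem le_top (B : BS n σ V) {u : BV} (hu : IsBVertex n u) :
    V u ≤ cpot n BV.s - cpot n u := by
  have := B.pass_le hu (B.reach u hu).pass
  rw [B.vs] at this; linarith

theorem cpot_nonneg {u : BV} (hu : IsBVertex n u) : 0 ≤ cpot n u := by
  have key : ∀ i, 1 ≤ i → (2:ℚ) ≤ 2 ^ i := fun i hi => by
    calc (2:ℚ) = 2 ^ 1 := by norm_num
      _ ≤ 2 ^ i := pow_le_pow_right₀ (by norm_num) hi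
  cases u <;> simp only [cpot, IsBVertex] at *
  · exact le_refl _
  · linarith [key (n + 1) (by omega)]
  · linarith [key (n + 1) (by omega)]
  · linarith [key _ hu.1]
  · rename_i i; linarith [key (i + 1) (by omega)]

theorem le_pow (B : BS n σ V) {u : BV} (hu : IsBVertex n u) : V u ≤ 2 ^ (n + 1) := by
  have h1 := B.le_top hu
  have h2 := cpot_nonneg hu
  have : cpot n BV.s = 2 ^ (n + 1) - 5 / 4 := rfl
  linarith

theorem abs_r {u w : BV} (h : BEdge n u w) : |rB n u w| ≤ 2 ^ (n + 1) := by
  have key : ∀ i, 1 ≤ i → (2:ℚ) ≤ 2 ^ i := fun i hi => by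
    calc (2:ℚ) = 2 ^ 1 := by norm_num
      _ ≤ 2 ^ i := pow_le_pow_right₀ (by norm_num) hi
  have kn := key (n + 1) (by omega)
  have kle : ∀ i, i ≤ n → (2:ℚ) ^ i ≤ 2 ^ (n + 1) := fun i hi =>
    pow_le_pow_right₀ (by norm_num) (by omega)
  refine BEdge.elim (P := fun u w => |rB n u w| ≤ 2 ^ (n + 1)) h ?_ ?_ ?_ ?_ ?_ ?_ ?_ ?_
  · intro i h1 h2; rw [rB_ta, abs_zero]; linarith
  · intro i h1 h2; rw [rB_ab, abs_le]; constructor <;> linarith [key i h1, kle i h2]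
  · intro i h1 h2; rw [rB_aa, abs_zero]; linarith
  · intro i h1 h2; rw [rB_at, abs_le]; constructor <;> linarith [key i h1, kle i h2]
  · intro i h1 h2; rw [rB_bb, abs_le]; constructor <;> linarith
  · intro i h1 h2; rw [rB_ba, abs_zero]; linarith
  · simp [rB]
  · simp [rB]

theorem abs_z (B : BS n σ V) {u w : BV} (h : BEdge n u w) : |zV n V u w| ≤ 2 ^ (n + 2) := by
  have h1 := abs_le.1 (abs_r h)
  have h2 := B.le_pow h.src
  have h3 := B.le_pow h.tgt
  have h4 := B.nonneg _ h.src
  have h5 := B.nonneg _ h.tgt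
  have : (2:ℚ) ^ (n + 2) = 2 * 2 ^ (n + 1) := by ring
  unfold zV
  rw [abs_le, this]; constructor <;> linarith [h1.1, h1.2]

theorem z_act (B : BS n σ V) {u : BV} (hu : IsBVertex n u) : zV n V u (σ u) = 0 := by
  unfold zV; rw [← B.bell u hu]; ring

/-- from `σ v` one never comes back to `v`. -/
theorem no_cycle (B : BS n σ V) {v : BV} (hv : IsBVertex n v) (hs : v ≠ BV.s) :
    ¬ Pass σ v (σ v) := by
  intro hp
  have hr := B.reach v hv
  have key : ∀ u, Reaches σ u → Pass σ v u → Pass σ u v → False := by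
    intro u hu
    induction hu with
    | base =>
      rintro ⟨k, hk⟩ _
      have : ∀ k, σ^[k] BV.s = BV.s := by
        intro k; induction k with
        | zero => rfl
        | succ k ih => simp [B.sig_s, ih]
      rw [this] at hk; exact hs hk.symm
    | step u _ ih =>
      intro h1 h2
      have h3 : Pass σ (σ u) v := by
        obtain ⟨k, hk⟩ := h2
        exact ⟨k + 1, by rw [Function.iterate_succ_apply', hk]⟩
      by_cases h : u = v
      · subst h; exact ih hp h3
      · exact ih ((pass_step h).1 h1) h3
  exact key v hr (Pass.self _ _) (Pass.self _ _)

/-- Facts about the new value function after an improving switch. -/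
structure Sw (n : ℕ) (σ : BV → BV) (V V' : BV → ℚ) (v w : BV) : Prop where
  pass : ∀ u, Pass σ v u → V' u = V u + zV n V v w
  npass : ∀ u, ¬ Pass σ v u → V' u = V u

open Classical in
theorem switch (B : BS n σ V) {v w : BV} (he : BEdge n v w) (hz : 0 < zV n V v w) :
    ∃ V', BS n (Function.update σ v w) V' ∧ Sw n σ V V' v w := by
  have hv := he.src
  have hw := he.tgt
  have hvs : v ≠ BV.s := by
    rintro rfl
    have := he.from_s; subst this
    simp [zV, rB] at hz
  have hnw : ¬ Pass σ v w := by
    intro h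
    have h1 := B.pass_le hw h
    have h2 := rB_le_cpot he
    unfold zV at hz; linarith
  refine ⟨fun u => if Pass σ v u then V u + zV n V v w else V u, ?_, ?_⟩
  · have hnr : ∀ u, Reaches σ u → ¬ Pass σ v u → Reaches (Function.update σ v w) u := by
      intro u hu
      induction hu with
      | base => intro _; exact Reaches.base
      | step u _ ih =>
        intro hp
        have huv : u ≠ v := by rintro rfl; exact hp (Pass.self _ _)
        apply Reaches.step
        rw [Function.update_of_ne huv]
        exact ih (fun h => hp ((pass_step huv).2 h))
    have hrv : Reaches (Function.update σ v w) v := by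
      apply Reaches.step
      rw [Function.update_self]
      exact hnr w (B.reach w hw) hnw
    constructor
    · intro u hu
      by_cases h : u = v
      · subst h; rw [Function.update_self]; exact he
      · rw [Function.update_of_ne h]; exact B.pol u hu
    · intro u hu
      have := B.reach u hu
      clear hu
      induction this with
      | base => exact Reaches.base
      | step u _ ih =>
        by_cases h : u = v
        · subst h; exact hrv
        · apply Reaches.step; rw [Function.update_of_ne h]; exact ih
    · have : ¬ Pass σ v BV.s := by
        rintro ⟨k, hk⟩
        have : ∀ k, σ^[k] BV.s = BV.s := by
          intro k; induction k with
          | zero => rfl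
          | succ k ih => simp [B.sig_s, ih]
        rw [this] at hk; exact hvs hk.symm
      simp [this, B.vs]
    · intro u hu
      by_cases h : u = v
      · subst h
        simp only [Function.update_self, Pass.self, if_true, hnw, if_false]
        unfold zV; ring
      · rw [Function.update_of_ne h]
        simp only [pass_step h]
        split_ifs
        · rw [B.bell u hu]; ring
        · exact B.bell u hu
    · intro u hu
      have := B.nonneg u hu
      show (0:ℚ) ≤ if Pass σ v u then V u + zV n V v w else V u
      split_ifs <;> linarith
  · constructor
    · intro u h; simp [h]
    · intro u h; simp [h]

end BS

theorem NV_inj {n : ℕ} {u v : BV} (hu : IsBVertex n u) (hv : IsBVertex n v)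
    (h : NV n u = NV n v) : u = v := by
  cases u <;> cases v <;> simp only [NV, IsBVertex, BV.a.injEq, BV.b.injEq, reduceCtorEq] at * <;> omega

/-! ### The phases of the run on `𝔅_n` -/

def VA (n : ℕ) (V : BV → ℚ) (i : ℕ) : ℚ := V (aN n i)
def VB (n : ℕ) (V : BV → ℚ) (i : ℕ) : ℚ := V (bN n i)

abbrev pE (σ : BV → BV) (i : ℕ) : Prop := σ (BV.a i) = BV.b i
abbrev pS (n : ℕ) (σ : BV → BV) (i : ℕ) : Prop := σ (BV.a i) = aN n (i + 1)
abbrev pT (σ : BV → BV) (i : ℕ) : Prop := σ (BV.a i) = BV.t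
abbrev ps (n : ℕ) (σ : BV → BV) (i : ℕ) : Prop := σ (BV.b i) = bN n (i + 1)
abbrev pl (n : ℕ) (σ : BV → BV) (i : ℕ) : Prop := σ (BV.b i) = aN n (i + 1)

theorem b_ne_aN (n i j : ℕ) : BV.b i ≠ aN n j := by unfold aN; split_ifs <;> simp
theorem t_ne_aN (n j : ℕ) : BV.t ≠ aN n j := by unfold aN; split_ifs <;> simp

theorem not_ET {σ : BV → BV} {i : ℕ} (h : pE σ i) : ¬ pT σ i := by
  intro h'; rw [pE] at h; rw [pT, h] at h'; cases h'
theorem not_ST {n : ℕ} {σ : BV → BV} {i : ℕ} (h : pS n σ i) : ¬ pT σ i := by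
  intro h'; rw [pS] at h; rw [pT, h] at h'; exact t_ne_aN _ _ h'.symm
theorem not_SE {n : ℕ} {σ : BV → BV} {i : ℕ} (h : pS n σ i) : ¬ pE σ i := by
  intro h'; rw [pS] at h; rw [pE, h] at h'; exact b_ne_aN _ _ _ h'.symm

theorem two_le_pow {i : ℕ} (hi : 1 ≤ i) : (2:ℚ) ≤ 2 ^ i := by
  calc (2:ℚ) = 2 ^ 1 := by norm_num
    _ ≤ 2 ^ i := pow_le_pow_right₀ (by norm_num) hi
theorem pow_mono {i j : ℕ} (hi : i ≤ j) : (2:ℚ) ^ i ≤ 2 ^ j :=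
  pow_le_pow_right₀ (by norm_num) hi

section vals
variable {n : ℕ} {σ : BV → BV} {V : BV → ℚ}

theorem vE (B : BS n σ V) {i : ℕ} (h1 : 1 ≤ i) (h2 : i ≤ n) (h : pE σ i) :
    VA n V i = 2 ^ i + VB n V i := by
  unfold VA VB
  rw [aN_le h2, bN_le h2, B.bell (BV.a i) ⟨h1, h2⟩, h, rB_ab]
theorem vS (B : BS n σ V) {i : ℕ} (h1 : 1 ≤ i) (h2 : i ≤ n) (h : pS n σ i) :
    VA n V i = VA n V (i + 1) := by
  unfold VA
  rw [aN_le h2, B.bell (BV.a i) ⟨h1, h2⟩, h, rB_aa, zero_add]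
theorem vT (B : BS n σ V) {i : ℕ} (h1 : 1 ≤ i) (h2 : i ≤ n) (h : pT σ i) :
    VA n V i = V BV.t - 2 ^ i + 5 / 4 := by
  unfold VA
  rw [aN_le h2, B.bell (BV.a i) ⟨h1, h2⟩, h, rB_at]; ring
theorem vs (B : BS n σ V) {i : ℕ} (h1 : 1 ≤ i) (h2 : i ≤ n) (h : ps n σ i) :
    VB n V i = VB n V (i + 1) + 3 / 4 := by
  unfold VB
  rw [bN_le h2, B.bell (BV.b i) ⟨h1, h2⟩, h, rB_bb]; ring
theorem vl (B : BS n σ V) {i : ℕ} (h1 : 1 ≤ i) (h2 : i ≤ n) (h : pl n σ i) :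
    VB n V i = VA n V (i + 1) := by
  unfold VA VB
  rw [bN_le h2, B.bell (BV.b i) ⟨h1, h2⟩, h, rB_ba, zero_add]
theorem vt (B : BS n σ V) {i : ℕ} (h2 : i ≤ n) (h : σ BV.t = BV.a i) :
    V BV.t = VA n V i := by
  unfold VA
  rw [aN_le h2, B.bell BV.t trivial, h, rB_ta, zero_add]
theorem vA_top (B : BS n σ V) : VA n V (n + 1) = 0 := by rw [VA, aN_top, B.vs]
theorem vB_top (B : BS n σ V) : VB n V (n + 1) = 0 := by rw [VB, bN_top, B.vd]
theorem vA_nonneg (B : BS n σ V) {i : ℕ} (h1 : 1 ≤ i) (h2 : i ≤ n + 1) : 0 ≤ VA n V i :=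
  B.nonneg _ (vert_aN h1 h2)
theorem vB_nonneg (B : BS n σ V) {i : ℕ} (h1 : 1 ≤ i) (h2 : i ≤ n + 1) : 0 ≤ VB n V i :=
  B.nonneg _ (vert_bN h1 h2)

theorem z_ta {i : ℕ} (h2 : i ≤ n) : zV n V BV.t (BV.a i) = VA n V i - V BV.t := by
  unfold zV VA; rw [rB_ta, aN_le h2, zero_add]
theorem z_ab {i : ℕ} (h2 : i ≤ n) :
    zV n V (BV.a i) (BV.b i) = 2 ^ i + VB n V i - VA n V i := by
  unfold zV VA VB; rw [rB_ab, aN_le h2, bN_le h2]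
theorem z_aa {i : ℕ} (h2 : i ≤ n) :
    zV n V (BV.a i) (aN n (i + 1)) = VA n V (i + 1) - VA n V i := by
  unfold zV VA; rw [rB_aa, aN_le h2, zero_add]
theorem z_at {i : ℕ} (h2 : i ≤ n) :
    zV n V (BV.a i) BV.t = V BV.t - 2 ^ i + 5 / 4 - VA n V i := by
  unfold zV VA; rw [rB_at, aN_le h2]; ring
theorem z_bb {i : ℕ} (h2 : i ≤ n) :
    zV n V (BV.b i) (bN n (i + 1)) = VB n V (i + 1) + 3 / 4 - VB n V i := by
  unfold zV VB; rw [rB_bb, bN_le h2]; ring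
theorem z_ba {i : ℕ} (h2 : i ≤ n) :
    zV n V (BV.b i) (aN n (i + 1)) = VA n V (i + 1) - VB n V i := by
  unfold zV VA VB; rw [rB_ba, bN_le h2, zero_add]

theorem optT (h : ∀ k, 1 ≤ k → k ≤ n → VA n V k ≤ V BV.t) : OptAt n V BV.t := by
  intro w hw
  obtain ⟨i, h1, h2, rfl⟩ := hw.from_t
  rw [z_ta h2]; linarith [h i h1 h2]
theorem optA {i : ℕ} (h1 : 2 ^ i + VB n V i ≤ VA n V i) (h2 : VA n V (i + 1) ≤ VA n V i)
    (h3 : V BV.t - 2 ^ i + 5 / 4 ≤ VA n V i) : OptAt n V (BV.a i) := by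
  intro w hw
  obtain ⟨_, hi, rfl | rfl | rfl⟩ := hw.from_a
  · rw [z_ab hi]; linarith
  · rw [z_aa hi]; linarith
  · rw [z_at hi]; linarith
theorem optB {i : ℕ} (h1 : VB n V (i + 1) + 3 / 4 ≤ VB n V i)
    (h2 : VA n V (i + 1) ≤ VB n V i) : OptAt n V (BV.b i) := by
  intro w hw
  obtain ⟨_, hi, rfl | rfl⟩ := hw.from_b
  · rw [z_bb hi]; linarith
  · rw [z_ba hi]; linarith

theorem lowA {i : ℕ} (hi : i ≤ n) (ht : OptAt n V BV.t)
    (h : ∀ k, 1 ≤ k → k < i → OptAt n V (BV.a k) ∧ OptAt n V (BV.b k)) :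
    ∀ u, IsBVertex n u → NV n u < NV n (BV.a i) → OptAt n V u := by
  intro u hu hlt
  cases u <;> simp only [NV, IsBVertex] at hu hlt
  · exact ht
  · omega
  · omega
  · exact (h _ hu.1 (by omega)).1
  · exact (h _ hu.1 (by omega)).2

theorem lowB {i : ℕ} (hi : i ≤ n) (ht : OptAt n V BV.t)
    (ha : OptAt n V (BV.a i))
    (h : ∀ k, 1 ≤ k → k < i → OptAt n V (BV.a k) ∧ OptAt n V (BV.b k)) :
    ∀ u, IsBVertex n u → NV n u < NV n (BV.b i) → OptAt n V u := by
  intro u hu hlt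
  cases u <;> simp only [NV, IsBVertex] at hu hlt
  · exact ht
  · omega
  · omega
  · rename_i k
    rcases Nat.lt_or_ge k i with h' | h'
    · exact (h _ hu.1 h').1
    · have : k = i := by omega
      subst this; exact ha
  · exact (h _ hu.1 (by omega)).2

theorem lowT : ∀ u, IsBVertex n u → NV n u < NV n BV.t → OptAt n V u := by
  intro u hu hlt
  cases u <;> simp only [NV, IsBVertex] at hu hlt <;> omega

end vals

def Bcond (n : ℕ) (σ : BV → BV) (i : ℕ) : Prop :=
  (i < n ∧ pT σ (i + 1) ∧ ps n σ i) ∨ ((i = n ∨ pE σ (i + 1) ∨ pS n σ (i + 1)) ∧ pl n σ i)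

def Loc (n : ℕ) (σ : BV → BV) (i : ℕ) : Prop :=
  (pE σ i ∧ Bcond n σ i) ∨
  (pS n σ i ∧ ((i < n ∧ pE σ (i + 1) ∧ ps n σ i) ∨ (pl n σ i ∧ (i = n ∨ pS n σ (i + 1))))) ∨
  (pT σ i ∧ i < n ∧ ((pT σ (i + 1) ∧ ps n σ i) ∨ (pS n σ (i + 1) ∧ pl n σ i)))

theorem Loc.bcond_T {n : ℕ} {σ : BV → BV} {i : ℕ} (h : Loc n σ i) (hT : pT σ i) :
    Bcond n σ i := by
  rcases h with h | h | ⟨_, h1, h2 | h2⟩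
  · exact h.2
  · exact absurd hT (not_ST h.1)
  · exact Or.inl ⟨h1, h2⟩
  · exact Or.inr ⟨Or.inr (Or.inr h2.1), h2.2⟩

theorem Loc.not_T {n : ℕ} {σ : BV → BV} {i : ℕ} (h : Loc n σ i) (hT : ¬ pT σ i) :
    (pE σ i ∧ Bcond n σ i) ∨ (pS n σ i ∧ (i < n → ¬ pT σ (i + 1))) := by
  rcases h with h | ⟨h, h' | h'⟩ | h
  · exact Or.inl h
  · exact Or.inr ⟨h, fun _ => not_ET h'.2.1⟩
  · refine Or.inr ⟨h, fun hn => ?_⟩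
    rcases h'.2 with h'' | h''
    · omega
    · exact not_ST h''
  · exact absurd h.1 hT

section Q
variable {n : ℕ} {σ : BV → BV} {V : BV → ℚ}

theorem lemmaQ (B : BS n σ V) {m : ℕ} (hm : 1 ≤ m)
    (hloc : ∀ i, m < i → i ≤ n → Loc n σ i) (d : ℕ) :
    ∀ i, i + d = n → m ≤ i →
    (m < i → ¬ pT σ i → ∀ j, i ≤ j → j ≤ n → ¬ pT σ j → VA n V j ≤ VA n V i) ∧
    (Bcond n σ i → ∀ j, i < j → j ≤ n → ¬ pT σ j → VA n V j ≤ VB n V i) := by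
  induction d with
  | zero =>
    intro i hi hmi
    refine ⟨fun _ _ j h1 h2 _ => ?_, fun _ j h1 h2 => by omega⟩
    have : i = j := by omega
    rw [this]
  | succ d ih =>
    intro i hi hmi
    obtain ⟨ihA, ihB⟩ := ih (i + 1) (by omega) (by omega)
    have hB : Bcond n σ i → ∀ j, i < j → j ≤ n → ¬ pT σ j → VA n V j ≤ VB n V i := by
      rintro (⟨_, hT, hs⟩ | ⟨hE, hl⟩) j h1 h2 h3
      · rw [vs B (by omega) (by omega) hs]
        have hne : j ≠ i + 1 := by rintro rfl; exact h3 hT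
        have := ihB ((hloc (i + 1) (by omega) (by omega)).bcond_T hT) j (by omega) h2 h3
        linarith
      · rw [vl B (by omega) (by omega) hl]
        have hnT : ¬ pT σ (i + 1) := by
          rcases hE with h | h | h
          · omega
          · exact not_ET h
          · exact not_ST h
        exact ihA (by omega) hnT j (by omega) h2 h3
    refine ⟨fun hmi' hnT j h1 h2 h3 => ?_, hB⟩
    rcases Nat.eq_or_lt_of_le h1 with rfl | hlt
    · exact le_refl _
    rcases (hloc i hmi' (by omega)).not_T hnT with ⟨hE, hb⟩ | ⟨hS, hn⟩
    · rw [vE B (by omega) (by omega) hE]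
      have := hB hb j hlt h2 h3
      have : (0:ℚ) < 2 ^ i := by positivity
      linarith
    · rw [vS B (by omega) (by omega) hS]
      exact ihA (by omega) (hn (by omega)) j (by omega) h2 h3

theorem Q_B (B : BS n σ V) {m : ℕ} (hm : 1 ≤ m) (hmn : m ≤ n)
    (hloc : ∀ i, m < i → i ≤ n → Loc n σ i) (hb : Bcond n σ m) {j : ℕ} (h1 : m < j) (h2 : j ≤ n) :
    VA n V j ≤ VB n V m ∨ VA n V j = V BV.t - 2 ^ j + 5 / 4 := by
  by_cases hT : pT σ j
  · exact Or.inr (vT B (by omega) h2 hT)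
  · exact Or.inl ((lemmaQ B hm hloc (n - m) m (by omega) le_rfl).2 hb j h1 h2 hT)

theorem Q_A (B : BS n σ V) {m : ℕ} (hm : 1 ≤ m) (hmn : m + 1 ≤ n)
    (hloc : ∀ i, m < i → i ≤ n → Loc n σ i) (hb : ¬ pT σ (m + 1)) {j : ℕ} (h1 : m < j)
    (h2 : j ≤ n) :
    VA n V j ≤ VA n V (m + 1) ∨ VA n V j = V BV.t - 2 ^ j + 5 / 4 := by
  by_cases hT : pT σ j
  · exact Or.inr (vT B (by omega) h2 hT)
  · exact Or.inl ((lemmaQ B hm hloc (n - (m + 1)) (m + 1) (by omega) (by omega)).1 (by omega) hb j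
      (by omega) h2 hT)

/-- values on a prefix of entered levels -/
theorem prefixVal (B : BS n σ V) {j q : ℕ} (hj : 1 ≤ j) (hq : q ≤ n)
    (hE : ∀ k, j ≤ k → k ≤ q → pE σ k) (hl : ∀ k, j ≤ k → k < q → pl n σ k) (d : ℕ) :
    ∀ k, k + d = q → j ≤ k → VA n V k = 2 * 2 ^ q - 2 ^ k + VB n V q := by
  induction d with
  | zero =>
    intro k hk hjk
    have : k = q := by omega
    subst this
    rw [vE B (by omega) hq (hE k hjk le_rfl)]; ring
  | succ d ih =>
    intro k hk hjk
    rw [vE B (by omega) (by omega) (hE k hjk (by omega)),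
      vl B (by omega) (by omega) (hl k hjk (by omega)), ih (k + 1) (by omega) (by omega)]
    rw [pow_succ]; ring

end Q

/-- count of the entered levels above `m`. -/
noncomputable def Cnt (n : ℕ) (σ : BV → BV) (m : ℕ) : ℕ :=
  ∑ i ∈ Finset.Ico m n, if pE σ (i + 1) then 2 ^ i else 0

theorem Cnt_congr {n : ℕ} {σ σ' : BV → BV} {m : ℕ}
    (h : ∀ i, m < i → σ' (BV.a i) = σ (BV.a i)) : Cnt n σ' m = Cnt n σ m := by
  unfold Cnt
  apply Finset.sum_congr rfl
  intro i hi
  rw [Finset.mem_Ico] at hi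
  simp only [pE]
  rw [h (i + 1) (by omega)]

theorem Cnt_step {n : ℕ} {σ : BV → BV} {m : ℕ} (h : m < n) :
    Cnt n σ m = (if pE σ (m + 1) then 2 ^ m else 0) + Cnt n σ (m + 1) := by
  unfold Cnt
  exact Finset.sum_eq_sum_Ico_succ_bot h _

theorem Cnt_all {n : ℕ} {σ : BV → BV} (m : ℕ) (hm : m ≤ n)
    (h : ∀ k, 1 ≤ k → k ≤ m → pE σ k) : Cnt n σ 0 + 1 = 2 ^ m + Cnt n σ m := by
  induction m with
  | zero => simp; omega
  | succ m ih =>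
    rw [ih (by omega) (fun k h1 h2 => h k h1 (by omega)), Cnt_step (m := m) (by omega),
      if_pos (h (m + 1) (by omega) le_rfl), pow_succ]
    ring

theorem Cnt_none {n : ℕ} {σ : BV → BV} (a d : ℕ) (hm : a + d ≤ n)
    (h : ∀ k, a < k → k ≤ a + d → ¬ pE σ k) : Cnt n σ a = Cnt n σ (a + d) := by
  induction d with
  | zero => simp
  | succ d ih =>
    rw [ih (by omega) (fun k h1 h2 => h k h1 (by omega)), Cnt_step (m := a + d) (by omega),
      if_neg (h (a + d + 1) (by omega) (by omega)), zero_add]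
    rfl

theorem upd {σ : BV → BV} {v w u y : BV} (h : u ≠ v) (h2 : σ u = y) :
    Function.update σ v w u = y := by
  rw [Function.update_of_ne h]; exact h2

structure Up (n q : ℕ) (σ : BV → BV) : Prop where
  hq : 1 ≤ q
  hn : q + 1 ≤ n
  loc : ∀ i, q + 1 < i → i ≤ n → Loc n σ i
  bc : Bcond n σ (q + 1)

theorem Loc_congr {n : ℕ} {σ σ' : BV → BV} {i : ℕ} (h1 : σ' (BV.a i) = σ (BV.a i))
    (h2 : σ' (BV.a (i + 1)) = σ (BV.a (i + 1))) (h3 : σ' (BV.b i) = σ (BV.b i))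
    (h : Loc n σ i) : Loc n σ' i := by
  unfold Loc Bcond pE pS pT ps pl at *
  rw [h1, h2, h3]; exact h

theorem Bcond_congr {n : ℕ} {σ σ' : BV → BV} {i : ℕ}
    (h2 : σ' (BV.a (i + 1)) = σ (BV.a (i + 1))) (h3 : σ' (BV.b i) = σ (BV.b i))
    (h : Bcond n σ i) : Bcond n σ' i := by
  unfold Bcond pE pS pT ps pl at *
  rw [h2, h3]; exact h

theorem Up.update {n q : ℕ} {σ : BV → BV} (U : Up n q σ) {v w : BV}
    (h1 : ∀ i, q + 1 < i → BV.a i ≠ v) (h2 : ∀ i, q + 1 ≤ i → BV.b i ≠ v) :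
    Up n q (Function.update σ v w) := by
  refine ⟨U.hq, U.hn, fun i hi hn => ?_, ?_⟩
  · exact Loc_congr (Function.update_of_ne (h1 _ (by omega)) _ _)
      (Function.update_of_ne (h1 _ (by omega)) _ _) (Function.update_of_ne (h2 _ (by omega)) _ _)
      (U.loc i hi hn)
  · exact Bcond_congr
      (Function.update_of_ne (h1 _ (by omega)) _ _) (Function.update_of_ne (h2 _ (by omega)) _ _)
      U.bc

/-- The invariant of the run on `𝔅_n`; the first argument bounds the number of switches. -/
inductive PhInv (n : ℕ) : ℕ → (BV → BV) → Prop
  | big {j : ℕ} {σ : BV → BV} (h : 2 ^ n ≤ j + 1) : PhInv n j σ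
  | init {j : ℕ} : PhInv n j (pi0 n)
  | ph0 {j : ℕ} {σ : BV → BV} (q : ℕ) (hq : 1 ≤ q) (hn : q + 1 < n) (ht : σ BV.t = BV.a 1)
      (hE : ∀ k, 1 ≤ k → k ≤ q → pE σ k) (hl : ∀ k, 1 ≤ k → k ≤ q → pl n σ k)
      (hS : pS n σ (q + 1)) (hs : ps n σ (q + 1)) (hE' : pE σ (q + 1 + 1))
      (hL : ∀ i, q + 1 < i → i ≤ n → Loc n σ i) (hc : Cnt n σ 0 ≤ j) : PhInv n j σ
  | ph1a {j : ℕ} {σ : BV → BV} (q : ℕ) (U : Up n q σ) (ht : σ BV.t = BV.a 1)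
      (hE : ∀ k, 1 ≤ k → k ≤ q → pE σ k) (hl : ∀ k, 1 ≤ k → k ≤ q → pl n σ k)
      (hS : pS n σ (q + 1)) (hl' : pl n σ (q + 1)) (hc : Cnt n σ 0 ≤ j) : PhInv n j σ
  | ph1b {j : ℕ} {σ : BV → BV} (q : ℕ) (U : Up n q σ) (ht : σ BV.t = BV.a 1)
      (hE : ∀ k, 1 ≤ k → k ≤ q → pE σ k) (hl : ∀ k, 1 ≤ k → k < q → pl n σ k) (hs : ps n σ q)
      (hS : (pS n σ (q + 1) ∧ pl n σ (q + 1)) ∨ pT σ (q + 1)) (hc : Cnt n σ 0 ≤ j) : PhInv n j σ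
  | ph2 {j : ℕ} {σ : BV → BV} (q : ℕ) (U : Up n q σ) (ht : σ BV.t = BV.a 1)
      (hE : ∀ k, 1 ≤ k → k ≤ q → pE σ k) (hl : ∀ k, 1 ≤ k → k < q → pl n σ k) (hs : ps n σ q)
      (hE' : pE σ (q + 1)) (hc : 2 ^ q + Cnt n σ (q + 1) ≤ j) : PhInv n j σ
  | ph3 {j : ℕ} {σ : BV → BV} (q i : ℕ) (U : Up n q σ) (hi : 1 ≤ i) (hiq : i ≤ q)
      (ht : σ BV.t = BV.a (q + 1))
      (hT : ∀ k, 1 ≤ k → k < i → pT σ k)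
      (hE : ∀ k, i ≤ k → k ≤ q → pE σ k) (hl : ∀ k, 1 ≤ k → k < q → pl n σ k) (hs : ps n σ q)
      (hE' : pE σ (q + 1)) (hc : 2 ^ q + Cnt n σ (q + 1) ≤ j) : PhInv n j σ
  | ph4 {j : ℕ} {σ : BV → BV} (q i : ℕ) (U : Up n q σ) (hiq : i + 2 ≤ q)
      (ht : σ BV.t = BV.a (q + 1))
      (hT : ∀ k, 1 ≤ k → k < q → pT σ k) (hS : pS n σ q) (hs : ps n σ q)
      (hl : ∀ k, k + 1 = q → pl n σ k) (hss : ∀ k, i < k → k + 2 ≤ q → ps n σ k)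
      (hll : ∀ k, 1 ≤ k → k ≤ i → pl n σ k)
      (hE' : pE σ (q + 1)) (hc : 2 ^ q + Cnt n σ (q + 1) ≤ j) : PhInv n j σ
  | ph5a {j : ℕ} {σ : BV → BV} (U : Up n 1 σ) (ht : σ BV.t = BV.a 2)
      (hS : pS n σ 1) (hs : ps n σ 1) (hE' : pE σ 2) (hc : 2 ^ 1 + Cnt n σ 2 ≤ j) : PhInv n j σ
  | ph5b {j : ℕ} {σ : BV → BV} (U : Up n 1 σ) (ht : σ BV.t = BV.a 2)
      (hS : pS n σ 1) (hs : pl n σ 1) (hE' : pE σ 2) (hc : 2 ^ 1 + Cnt n σ 2 ≤ j) : PhInv n j σ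
  | ph6 {j : ℕ} {σ : BV → BV} (q : ℕ) (hq : 1 ≤ q) (hn : q + 1 ≤ n)
      (ht : σ BV.t = BV.a (q + 1))
      (hE : pE σ 1) (hE' : pE σ (q + 1)) (hL : ∀ i, 1 ≤ i → i ≤ n → Loc n σ i)
      (hc : Cnt n σ 0 ≤ j) : PhInv n j σ

theorem canon_inv {n j : ℕ} {σ : BV → BV} (ht : σ BV.t = BV.a 1) (hE : pE σ 1)
    (hL : ∀ i, 1 ≤ i → i ≤ n → Loc n σ i) (hc : Cnt n σ 0 ≤ j) : PhInv n j σ := by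
  by_cases hall : ∀ k, 1 ≤ k → k ≤ n → pE σ k
  · apply PhInv.big
    have := Cnt_all n le_rfl hall
    omega
  · push Not at hall
    classical
    have hex : ∃ k, 1 ≤ k ∧ k ≤ n ∧ ¬ pE σ k := hall
    obtain ⟨h1, h2, h3⟩ := Nat.find_spec hex
    have hmin : ∀ k, 1 ≤ k → k < Nat.find hex → pE σ k := by
      intro k hk hlt
      have := Nat.find_min hex hlt
      by_contra h
      exact this ⟨hk, by omega, h⟩
    have hne : Nat.find hex ≠ 1 := by
      intro h; rw [h] at h3; exact h3 hE
    obtain ⟨q, hq⟩ : ∃ q, Nat.find hex = q + 1 := ⟨Nat.find hex - 1, by omega⟩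
    rw [hq] at h1 h2 h3 hmin hne
    clear hq
    have hq1 : 1 ≤ q := by omega
    have hE2 : ∀ k, 1 ≤ k → k ≤ q → pE σ k := fun k a b => hmin k a (by omega)
    have hB : ∀ k, 1 ≤ k → k ≤ q → Bcond n σ k := by
      intro k a b
      rcases hL k a (by omega) with h | h | h
      · exact h.2
      · exact absurd (hE2 k a b) (not_SE h.1)
      · exact absurd h.1 (not_ET (hE2 k a b))
    have hl : ∀ k, 1 ≤ k → k < q → pl n σ k := by
      intro k a b
      rcases hB k a (by omega) with h | h
      · exact absurd h.2.1 (not_ET (hE2 (k + 1) (by omega) (by omega)))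
      · exact h.2
    have hup : ∀ i, q + 1 < i → i ≤ n → Loc n σ i := fun i a b => hL i (by omega) b
    rcases hB q hq1 le_rfl with ⟨_, hT, hs⟩ | ⟨hS, hl'⟩
    · exact PhInv.ph1b q ⟨hq1, h2, hup, (hL (q + 1) (by omega) h2).bcond_T hT⟩ ht hE2 hl hs
        (Or.inr hT) hc
    · have hS : pS n σ (q + 1) := by
        rcases hS with h | h | h
        · omega
        · exact absurd h h3
        · exact h
      have hl2 : ∀ k, 1 ≤ k → k ≤ q → pl n σ k := by
        intro k a b
        rcases Nat.lt_or_ge k q with h | h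
        · exact hl k a h
        · have : k = q := by omega
          subst this; exact hl'
      rcases hL (q + 1) (by omega) h2 with h | ⟨_, ⟨a, b, c⟩ | ⟨a, b⟩⟩ | h
      · exact absurd h.1 h3
      · exact PhInv.ph0 q hq1 a ht hE2 hl2 hS c b hup hc
      · refine PhInv.ph1a q ⟨hq1, h2, hup, Or.inr ⟨?_, a⟩⟩ ht hE2 hl2 hS a hc
        rcases b with b | b
        · exact Or.inl b
        · exact Or.inr (Or.inr b)
      · exact absurd h.1 (not_ST hS)

/-- There is a unique possible good switch, and it preserves the invariant. -/
def Next (n j : ℕ) (σ : BV → BV) (V : BV → ℚ) : Prop :=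
  ∃ v0 w0, BEdge n v0 w0 ∧ 0 < zV n V v0 w0 ∧
    (∀ u, IsBVertex n u → NV n u < NV n v0 → OptAt n V u) ∧
    (∀ w', BEdge n v0 w' → w' ≠ w0 → zV n V v0 w' ≤ 0 ∨
      (zV n V v0 w' < zV n V v0 w0 ∧ NB n v0 w0 < NB n v0 w')) ∧
    PhInv n (j + 1) (Function.update σ v0 w0)

section nexts
variable {n j : ℕ} {σ : BV → BV} {V : BV → ℚ}

theorem next_enter (i : ℕ) (h1 : 1 ≤ i) (h2 : i ≤ n) (ht : OptAt n V BV.t)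
    (h : ∀ k, 1 ≤ k → k < i → OptAt n V (BV.a k) ∧ OptAt n V (BV.b k))
    (hz : VA n V i < 2 ^ i + VB n V i)
    (hS : VA n V (i + 1) ≤ VA n V i ∨ VA n V (i + 1) < 2 ^ i + VB n V i)
    (hT : V BV.t - 2 ^ i + 5 / 4 ≤ VA n V i)
    (hI : PhInv n (j + 1) (Function.update σ (BV.a i) (BV.b i))) : Next n j σ V := by
  refine ⟨BV.a i, BV.b i, edge_ab h1 h2, ?_, lowA h2 ht h, ?_, hI⟩
  · rw [z_ab h2]; linarith
  · intro w' hw hne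
    obtain ⟨_, _, rfl | rfl | rfl⟩ := hw.from_a
    · exact absurd rfl hne
    · rw [z_aa h2, z_ab h2]
      rcases hS with hS | hS
      · left; linarith
      · right; refine ⟨by linarith, ?_⟩
        unfold aN; split_ifs <;> simp [NB]
    · left; rw [z_at h2]; linarith

theorem next_stay (i : ℕ) (h1 : 1 ≤ i) (h2 : i ≤ n) (ht : OptAt n V BV.t)
    (ha : OptAt n V (BV.a i))
    (h : ∀ k, 1 ≤ k → k < i → OptAt n V (BV.a k) ∧ OptAt n V (BV.b k))
    (hz : VB n V i < VB n V (i + 1) + 3 / 4)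
    (hS : VA n V (i + 1) ≤ VB n V i)
    (hI : PhInv n (j + 1) (Function.update σ (BV.b i) (bN n (i + 1)))) : Next n j σ V := by
  refine ⟨BV.b i, bN n (i + 1), edge_bb h1 h2, ?_, lowB h2 ht ha h, ?_, hI⟩
  · rw [z_bb h2]; linarith
  · intro w' hw hne
    obtain ⟨_, _, rfl | rfl⟩ := hw.from_b
    · exact absurd rfl hne
    · left; rw [z_ba h2]; linarith

theorem next_leave (i : ℕ) (h1 : 1 ≤ i) (h2 : i ≤ n) (ht : OptAt n V BV.t)
    (ha : OptAt n V (BV.a i))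
    (h : ∀ k, 1 ≤ k → k < i → OptAt n V (BV.a k) ∧ OptAt n V (BV.b k))
    (hz : VB n V i < VA n V (i + 1))
    (hS : VB n V (i + 1) + 3 / 4 ≤ VB n V i)
    (hI : PhInv n (j + 1) (Function.update σ (BV.b i) (aN n (i + 1)))) : Next n j σ V := by
  refine ⟨BV.b i, aN n (i + 1), edge_ba h1 h2, ?_, lowB h2 ht ha h, ?_, hI⟩
  · rw [z_ba h2]; linarith
  · intro w' hw hne
    obtain ⟨_, _, rfl | rfl⟩ := hw.from_b
    · left; rw [z_bb h2]; linarith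
    · exact absurd rfl hne

theorem next_board (i : ℕ) (h1 : 1 ≤ i) (h2 : i ≤ n) (ht : OptAt n V BV.t)
    (h : ∀ k, 1 ≤ k → k < i → OptAt n V (BV.a k) ∧ OptAt n V (BV.b k))
    (hz : VA n V i < V BV.t - 2 ^ i + 5 / 4)
    (hS : VA n V (i + 1) ≤ VA n V i)
    (hE : 2 ^ i + VB n V i ≤ VA n V i)
    (hI : PhInv n (j + 1) (Function.update σ (BV.a i) BV.t)) : Next n j σ V := by
  refine ⟨BV.a i, BV.t, edge_at h1 h2, ?_, lowA h2 ht h, ?_, hI⟩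
  · rw [z_at h2]; linarith
  · intro w' hw hne
    obtain ⟨_, _, rfl | rfl | rfl⟩ := hw.from_a
    · left; rw [z_ab h2]; linarith
    · left; rw [z_aa h2]; linarith
    · exact absurd rfl hne

theorem next_skip (i : ℕ) (h1 : 1 ≤ i) (h2 : i ≤ n) (ht : OptAt n V BV.t)
    (h : ∀ k, 1 ≤ k → k < i → OptAt n V (BV.a k) ∧ OptAt n V (BV.b k))
    (hz : VA n V i < VA n V (i + 1))
    (hT : V BV.t - 2 ^ i + 5 / 4 < VA n V (i + 1))
    (hE : 2 ^ i + VB n V i ≤ VA n V i)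
    (hI : PhInv n (j + 1) (Function.update σ (BV.a i) (aN n (i + 1)))) : Next n j σ V := by
  refine ⟨BV.a i, aN n (i + 1), edge_aa h1 h2, ?_, lowA h2 ht h, ?_, hI⟩
  · rw [z_aa h2]; linarith
  · intro w' hw hne
    obtain ⟨_, _, rfl | rfl | rfl⟩ := hw.from_a
    · left; rw [z_ab h2]; linarith
    · exact absurd rfl hne
    · right; rw [z_at h2, z_aa h2]; refine ⟨by linarith, ?_⟩
      unfold aN; split_ifs <;> simp [NB]

theorem next_travel (i : ℕ) (h1 : 1 ≤ i) (h2 : i ≤ n) 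
    (hz : V BV.t < VA n V i)
    (hS : ∀ k, 1 ≤ k → k ≤ n → k ≠ i → VA n V k ≤ V BV.t ∨ (VA n V k < VA n V i ∧ i < k))
    (hI : PhInv n (j + 1) (Function.update σ BV.t (BV.a i))) : Next n j σ V := by
  refine ⟨BV.t, BV.a i, edge_ta h1 h2, ?_, lowT, ?_, hI⟩
  · rw [z_ta h2]; linarith
  · intro w' hw hne
    obtain ⟨k, a, b, rfl⟩ := hw.from_t
    rw [z_ta b, z_ta h2]
    rcases hS k a b (by rintro rfl; exact hne rfl) with h | h
    · left; linarith
    · right; exact ⟨by linarith, by simpa [NB] using h.2⟩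
end nexts

section phases
variable {n j : ℕ} {σ : BV → BV} {V : BV → ℚ}

theorem next_init (hn : 1 ≤ n) (B : BS n (pi0 n) V) : Next n j (pi0 n) V := by
  have hA : ∀ d k, k + d = n + 1 → 1 ≤ k → VA n V k = 0 := by
    intro d
    induction d with
    | zero => intro k hk _; have : k = n + 1 := by omega
              subst this; exact vA_top B
    | succ d ih => intro k hk h1; rw [vS B h1 (by omega) rfl]; exact ih (k + 1) (by omega) (by omega)
  have hA' : ∀ k, 1 ≤ k → k ≤ n + 1 → VA n V k = 0 := fun k h1 h2 => hA (n + 1 - k) k (by omega) h1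
  have hB : VB n V 1 = 0 := by rw [vl B le_rfl hn rfl]; exact hA' 2 (by omega) (by omega)
  have ht : V BV.t = 0 := by rw [vt B hn (i := 1) rfl]; exact hA' 1 le_rfl (by omega)
  have h1 := hA' 1 le_rfl (by omega)
  have h2 := hA' (1 + 1) (by omega) (by omega)
  refine next_enter 1 le_rfl hn ?_ (fun k a b => by omega) ?_ ?_ ?_ ?_
  · apply optT; intro k a b; rw [hA' k a (by omega), ht]
  · rw [h1, hB]; norm_num
  · left; rw [h1, h2]
  · rw [h1, ht]; norm_num
  · have hES : ∀ i, i ≠ 1 → pS n (Function.update (pi0 n) (BV.a 1) (BV.b 1)) i :=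
      fun i hi => upd (by simpa using hi) rfl
    have hll : ∀ i, pl n (Function.update (pi0 n) (BV.a 1) (BV.b 1)) i :=
      fun i => upd (by simp) rfl
    have hE : pE (Function.update (pi0 n) (BV.a 1) (BV.b 1)) 1 := Function.update_self _ _ _
    refine canon_inv (upd (by simp) rfl) hE ?_ ?_
    · intro i a b
      by_cases h : i = 1
      · subst h
        exact Or.inl ⟨hE, Or.inr ⟨Or.inr (Or.inr (hES 2 (by omega))), hll 1⟩⟩
      · exact Or.inr (Or.inl ⟨hES i h, Or.inr ⟨hll i, Or.inr (hES (i + 1) (by omega))⟩⟩)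
    · have e1 := Cnt_all (n := n) 1 hn (fun k a b => by
        have : k = 1 := by omega
        subst this; exact hE)
      have e2 := Cnt_none (n := n) (σ := Function.update (pi0 n) (BV.a 1) (BV.b 1)) 1 (n - 1) (by omega)
        (fun k a b => not_SE (hES k (by omega)))
      have e3 : Cnt n (Function.update (pi0 n) (BV.a 1) (BV.b 1)) (1 + (n - 1)) = 0 := by
        rw [show 1 + (n - 1) = n by omega]; simp [Cnt]
      omega

/-- optimality on a prefix of entered levels -/
theorem pre_opt (B : BS n σ V) {q : ℕ} (hq : 1 ≤ q) (hn : q ≤ n) (ht : σ BV.t = BV.a 1)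
    (hE : ∀ k, 1 ≤ k → k ≤ q → pE σ k) (hl : ∀ k, 1 ≤ k → k < q → pl n σ k) :
    V BV.t = 2 * 2 ^ q - 2 + VB n V q ∧
    (∀ k, 1 ≤ k → k ≤ q → VA n V k = 2 * 2 ^ q - 2 ^ k + VB n V q) ∧
    (∀ k, 1 ≤ k → k < q → OptAt n V (BV.a k) ∧ OptAt n V (BV.b k)) ∧
    (VA n V (q + 1) ≤ 2 ^ q + VB n V q → OptAt n V (BV.a q)) := by
  have hv : ∀ k, 1 ≤ k → k ≤ q → VA n V k = 2 * 2 ^ q - 2 ^ k + VB n V q := fun k h1 h2 =>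
    prefixVal B le_rfl hn hE hl (q - k) k (by omega) h1
  have hτ : V BV.t = 2 * 2 ^ q - 2 + VB n V q := by
    rw [vt B (by omega) ht, hv 1 le_rfl hq]; norm_num
  refine ⟨hτ, hv, fun k h1 h2 => ⟨?_, ?_⟩, fun h => ?_⟩
  · have e1 := hv k h1 (by omega)
    have e2 := hv (k + 1) (by omega) (by omega)
    have e3 := vE B h1 (by omega) (hE k h1 (by omega))
    have e4 : (0:ℚ) < 2 ^ k := by positivity
    rw [pow_succ] at e2
    apply optA <;> linarith
  · have e2 := hv (k + 1) (by omega) (by omega)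
    have e3 := vE B (i := k + 1) (by omega) (by omega) (hE (k + 1) (by omega) (by omega))
    have e4 := vl B h1 (by omega) (hl k h1 h2)
    have e5 := two_le_pow (i := k + 1) (by omega)
    apply optB <;> linarith
  · have e1 := hv q hq le_rfl
    have e3 := vE B hq hn (hE q hq le_rfl)
    apply optA <;> linarith

theorem next_ph0 (B : BS n σ V) (q : ℕ) (hq : 1 ≤ q) (hn : q + 1 < n) (ht : σ BV.t = BV.a 1)
      (hE : ∀ k, 1 ≤ k → k ≤ q → pE σ k) (hl : ∀ k, 1 ≤ k → k ≤ q → pl n σ k)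
      (hS : pS n σ (q + 1)) (hs : ps n σ (q + 1)) (hE' : pE σ (q + 1 + 1))
      (hL : ∀ i, q + 1 < i → i ≤ n → Loc n σ i) (hc : Cnt n σ 0 ≤ j) : Next n j σ V := by
  obtain ⟨hτ, hv, ho, hoq⟩ := pre_opt B hq (by omega) ht hE (fun k a b => hl k a (by omega))
  have e1 := vS B (by omega) (by omega) hS
  have e2 := vs B (by omega) (by omega) hs
  have e3 := vE B (by omega) (by omega) hE'
  have e4 := vl B hq (by omega) (hl q hq le_rfl)
  have p1 := two_le_pow hq
  rw [pow_succ, pow_succ] at e3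
  have hup : ∀ k, q + 1 < k → k ≤ n → VA n V k ≤ V BV.t := by
    intro k h1 h2
    rcases Q_A B (m := q + 1) (by omega) hn hL (not_ET hE') h1 h2 with h | h
    · linarith
    · have := two_le_pow (i := k) (by omega); linarith
  refine next_leave (q + 1) (by omega) (by omega) ?_ ?_ ?_ ?_ ?_ ?_
  · apply optT
    intro k h1 h2
    rcases Nat.lt_or_ge q k with h | h
    · rcases Nat.lt_or_ge (q + 1) k with h' | h'
      · exact hup k h' h2
      · have : k = q + 1 := by omega
        subst this; linarith
    · rw [hv k h1 h]; linarith [two_le_pow h1]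
  · apply optA
    · rw [pow_succ]; linarith
    · linarith
    · rw [pow_succ]; linarith
  · intro k h1 h2
    rcases Nat.lt_or_ge k q with h | h
    · exact ho k h1 h
    · have : k = q := by omega
      subst this
      exact ⟨hoq (by linarith), by apply optB <;> linarith⟩
  · linarith
  · linarith
  · refine PhInv.ph1a q ⟨hq, by omega, fun i a b => ?_, ?_⟩ (upd (by simp) ht)
      (fun k a b => upd (by simp) (hE k a b)) (fun k a b => upd (by simp; omega) (hl k a b))
      (upd (by simp) hS) (Function.update_self _ _ _) ?_
    · exact Loc_congr (Function.update_of_ne (by simp) _ _) (Function.update_of_ne (by simp) _ _)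
        (Function.update_of_ne (by simp; omega) _ _) (hL i a b)
    · exact Or.inr ⟨Or.inr (Or.inl (upd (by simp) hE')), Function.update_self _ _ _⟩
    · rw [Cnt_congr (σ := σ) (fun i _ => upd (by simp) rfl)]; omega

theorem next_ph1a (B : BS n σ V) (q : ℕ) (U : Up n q σ) (ht : σ BV.t = BV.a 1)
      (hE : ∀ k, 1 ≤ k → k ≤ q → pE σ k) (hl : ∀ k, 1 ≤ k → k ≤ q → pl n σ k)
      (hS : pS n σ (q + 1)) (hl' : pl n σ (q + 1)) (hc : Cnt n σ 0 ≤ j) : Next n j σ V := by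
  have hq := U.hq
  have hn := U.hn
  obtain ⟨hτ, hv, ho, hoq⟩ := pre_opt B hq (by omega) ht hE (fun k a b => hl k a (by omega))
  have e1 := vS B (by omega) (by omega) hS
  have e2 := vl B (by omega) (by omega) hl'
  have e4 := vl B hq (by omega) (hl q hq le_rfl)
  have p1 := two_le_pow hq
  have hup : ∀ k, q + 1 < k → k ≤ n → VA n V k ≤ V BV.t := by
    intro k h1 h2
    rcases Q_B B (m := q + 1) (by omega) hn U.loc U.bc h1 h2 with h | h
    · linarith
    · have := two_le_pow (i := k) (by omega); linarith
  refine next_stay q hq (by omega) ?_ ?_ ho ?_ ?_ ?_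
  · apply optT
    intro k h1 h2
    rcases Nat.lt_or_ge q k with h | h
    · rcases Nat.lt_or_ge (q + 1) k with h' | h'
      · exact hup k h' h2
      · have : k = q + 1 := by omega
        subst this; linarith
    · rw [hv k h1 h]; linarith [two_le_pow h1]
  · exact hoq (by linarith)
  · linarith
  · linarith
  · refine PhInv.ph1b q (U.update (by simp) (by simp; omega)) (upd (by simp) ht)
      (fun k a b => upd (by simp) (hE k a b)) (fun k a b => upd (by simp; omega) (hl k a (by omega)))
      (Function.update_self _ _ _) (Or.inl ⟨upd (by simp) hS, upd (by simp) hl'⟩) ?_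
    rw [Cnt_congr (σ := σ) (fun i _ => upd (by simp) rfl)]; omega

theorem next_ph1b (B : BS n σ V) (q : ℕ) (U : Up n q σ) (ht : σ BV.t = BV.a 1)
      (hE : ∀ k, 1 ≤ k → k ≤ q → pE σ k) (hl : ∀ k, 1 ≤ k → k < q → pl n σ k) (hs : ps n σ q)
      (hS : (pS n σ (q + 1) ∧ pl n σ (q + 1)) ∨ pT σ (q + 1)) (hc : Cnt n σ 0 ≤ j) :
      Next n j σ V := by
  have hq := U.hq
  have hn := U.hn
  obtain ⟨hτ, hv, ho, hoq⟩ := pre_opt B hq (by omega) ht hE hl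
  have e4 := vs B hq (by omega) hs
  have p1 := two_le_pow hq
  have e1 : VA n V (q + 1) = VB n V (q + 1) := by
    rcases hS with ⟨hS, hl'⟩ | hT
    · rw [vS B (by omega) (by omega) hS, vl B (by omega) (by omega) hl']
    · rw [vT B (by omega) (by omega) hT, pow_succ]; linarith
  have hup : ∀ k, q + 1 < k → k ≤ n → VA n V k ≤ VB n V (q + 1) := by
    intro k h1 h2
    rcases Q_B B (m := q + 1) (by omega) hn U.loc U.bc h1 h2 with h | h
    · exact h
    · have := pow_mono (i := q + 1) (j := k) (by omega)
      rw [pow_succ] at this; linarith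
  refine next_enter (q + 1) (by omega) (by omega) ?_ ?_ ?_ ?_ ?_ ?_
  · apply optT
    intro k h1 h2
    rcases Nat.lt_or_ge q k with h | h
    · rcases Nat.lt_or_ge (q + 1) k with h' | h'
      · linarith [hup k h' h2]
      · have : k = q + 1 := by omega
        subst this; linarith
    · rw [hv k h1 h]; linarith [two_le_pow h1]
  · intro k h1 h2
    rcases Nat.lt_or_ge k q with h | h
    · exact ho k h1 h
    · have : k = q := by omega
      subst this
      exact ⟨hoq (by linarith), by apply optB <;> linarith⟩
  · rw [e1, pow_succ]; linarith
  · left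
    rcases Nat.lt_or_ge (q + 1) n with h | h
    · linarith [hup (q + 1 + 1) (by omega) (by omega)]
    · have : q + 1 = n := by omega
      rw [this, vA_top B]; exact vA_nonneg B (by omega) (by omega)
  · rw [e1, pow_succ]; linarith
  · refine PhInv.ph2 q (U.update (by simp; omega) (by simp)) (upd (by simp) ht)
      (fun k a b => upd (by simp; omega) (hE k a b)) (fun k a b => upd (by simp) (hl k a (by omega)))
      (upd (by simp) hs) (Function.update_self _ _ _) ?_
    rw [Cnt_congr (σ := σ) (m := q + 1) (fun i _ => upd (by simp; omega) rfl)]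
    have c1 := Cnt_all (n := n) q (by omega) hE
    have hnE : ¬ pE σ (q + 1) := by
      rcases hS with h | h
      · exact not_SE h.1
      · exact fun h' => not_ET h' h
    have c2 := Cnt_step (n := n) (σ := σ) (m := q) (by omega)
    rw [if_neg hnE] at c2
    omega

theorem next_ph2 (B : BS n σ V) (q : ℕ) (U : Up n q σ) (ht : σ BV.t = BV.a 1)
      (hE : ∀ k, 1 ≤ k → k ≤ q → pE σ k) (hl : ∀ k, 1 ≤ k → k < q → pl n σ k) (hs : ps n σ q)
      (hE' : pE σ (q + 1)) (hc : 2 ^ q + Cnt n σ (q + 1) ≤ j) : Next n j σ V := by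
  have hq := U.hq
  have hn := U.hn
  obtain ⟨hτ, hv, ho, hoq⟩ := pre_opt B hq (by omega) ht hE hl
  have e4 := vs B hq (by omega) hs
  have p1 := two_le_pow hq
  have e1 := vE B (by omega) hn hE'
  rw [pow_succ] at e1
  refine next_travel (q + 1) (by omega) hn (by linarith) ?_ ?_
  · intro k h1 h2 hne
    left
    rcases Nat.lt_or_ge q k with h | h
    · rcases Q_B B (m := q + 1) (by omega) hn U.loc U.bc (j := k) (by omega) h2 with h' | h'
      · linarith
      · have := two_le_pow h1
        linarith
    · rw [hv k h1 h]; linarith [two_le_pow h1]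
  · refine PhInv.ph3 q 1 (U.update (by simp) (by simp)) le_rfl hq (Function.update_self _ _ _)
      (fun k a b => by omega)
      (fun k a b => upd (by simp) (hE k a b)) (fun k a b => upd (by simp) (hl k a (by omega)))
      (upd (by simp) hs) (upd (by simp) hE') ?_
    rw [Cnt_congr (σ := σ) (m := q + 1) (fun i _ => upd (by simp) rfl)]
    omega

end phases

section phases2
variable {n j : ℕ} {σ : BV → BV} {V : BV → ℚ}

theorem up_val (B : BS n σ V) {q : ℕ} (U : Up n q σ) (ht : σ BV.t = BV.a (q + 1))
    (hE' : pE σ (q + 1)) : V BV.t = 2 * 2 ^ q + VB n V (q + 1) ∧ VA n V (q + 1) = V BV.t ∧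
    ∀ k, q < k → k ≤ n → VA n V k ≤ V BV.t := by
  have hn := U.hn
  have e1 := vE B (by omega) hn hE'
  have e2 := vt B hn ht
  rw [pow_succ] at e1
  have p : (0:ℚ) < 2 ^ q := by positivity
  refine ⟨by linarith, e2.symm, fun k h1 h2 => ?_⟩
  rcases Nat.lt_or_ge (q + 1) k with h | h
  · rcases Q_B B (m := q + 1) (by omega) hn U.loc U.bc h h2 with h' | h'
    · linarith
    · have := two_le_pow (i := k) (by omega)
      linarith
  · have : k = q + 1 := by omega
    subst this; exact e2.ge

theorem next_ph3 (B : BS n σ V) (q i : ℕ) (U : Up n q σ) (hi : 1 ≤ i) (hiq : i ≤ q)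
      (ht : σ BV.t = BV.a (q + 1))
      (hT : ∀ k, 1 ≤ k → k < i → pT σ k)
      (hE : ∀ k, i ≤ k → k ≤ q → pE σ k) (hl : ∀ k, 1 ≤ k → k < q → pl n σ k) (hs : ps n σ q)
      (hE' : pE σ (q + 1)) (hc : 2 ^ q + Cnt n σ (q + 1) ≤ j) : Next n j σ V := by
  have hq := U.hq
  have hn := U.hn
  obtain ⟨hτ, hA, hup⟩ := up_val B U ht hE'
  have e4 := vs B hq (by omega) hs
  have hv : ∀ k, i ≤ k → k ≤ q → VA n V k = V BV.t - 2 ^ k + 3 / 4 := by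
    intro k h1 h2
    rw [prefixVal B hi (by omega) hE (fun k a b => hl k (by omega) b) (q - k) k (by omega) h1]
    linarith
  have hvT : ∀ k, 1 ≤ k → k < i → VA n V k = V BV.t - 2 ^ k + 5 / 4 := by
    intro k h1 h2
    rw [vT B h1 (by omega) (hT k h1 h2)]
  have hbd : ∀ k, 1 ≤ k → k ≤ q →
      V BV.t - 2 ^ k + 3 / 4 ≤ VA n V k ∧ VA n V k ≤ V BV.t - 2 ^ k + 5 / 4 := by
    intro k h1 h2
    rcases Nat.lt_or_ge k i with h | h
    · rw [hvT k h1 h]; constructor <;> linarith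
    · rw [hv k h h2]; constructor <;> linarith
  have hot : OptAt n V BV.t := by
    apply optT
    intro k h1 h2
    rcases Nat.lt_or_ge q k with h | h
    · exact hup k h h2
    · have := (hbd k h1 h).2
      have := two_le_pow h1
      linarith
  have hlow : ∀ k, 1 ≤ k → k < i → OptAt n V (BV.a k) ∧ OptAt n V (BV.b k) := by
    intro k h1 h2
    have a1 := hvT k h1 h2
    have a2 := hbd (k + 1) (by omega) (by omega)
    have a3 := vl B h1 (by omega) (hl k h1 (by omega))
    have p := two_le_pow h1
    rw [pow_succ] at a2
    refine ⟨by apply optA <;> linarith, ?_⟩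
    apply optB
    · rcases Nat.lt_or_ge (k + 1) q with h | h
      · have a4 := hbd (k + 1 + 1) (by omega) (by omega)
        have a5 := vl B (by omega) (by omega) (hl (k + 1) (by omega) h)
        rw [pow_succ, pow_succ] at a4
        linarith
      · have : q = k + 1 := by omega
        subst this
        rw [pow_succ] at hτ
        linarith
    · linarith
  have a1 := hv i le_rfl hiq
  have a2 := vE B hi (by omega) (hE i le_rfl hiq)
  have p := two_le_pow hi
  rcases Nat.lt_or_ge i q with h | h
  · have a3 := hv (i + 1) (by omega) (by omega)
    rw [pow_succ] at a3
    refine next_board i hi (by omega) hot hlow (by linarith) (by linarith) (by linarith) ?_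
    refine PhInv.ph3 q (i + 1) (U.update (by simp; omega) (by simp)) (by omega) h
      (upd (by simp) ht) (fun k a b => ?_) (fun k a b => upd (by simp; omega) (hE k (by omega) b))
      (fun k a b => upd (by simp) (hl k a b)) (upd (by simp) hs) (upd (by simp; omega) hE') ?_
    · by_cases hk : k = i
      · subst hk; exact Function.update_self _ _ _
      · exact upd (by simpa using hk) (hT k a (by omega))
    · rw [Cnt_congr (σ := σ) (m := q + 1) (fun i _ => upd (by simp; omega) rfl)]
      omega
  · have : i = q := by omega
    subst this
    refine next_skip i hi (by omega) hot hlow (by linarith) (by linarith) (by linarith) ?_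
    rcases Nat.lt_or_ge 1 i with h2 | h2
    · obtain ⟨m, rfl⟩ : ∃ m, i = m + 2 := ⟨i - 2, by omega⟩
      refine PhInv.ph4 (m + 2) m (U.update (by simp; omega) (by simp)) le_rfl (upd (by simp) ht)
        (fun k a b => upd (by simp; omega) (hT k a b)) (Function.update_self _ _ _)
        (upd (by simp) hs) (fun k a => upd (by simp) (hl k (by omega) (by omega)))
        (fun k a b => by omega) (fun k a b => upd (by simp) (hl k a (by omega)))
        (upd (by simp) hE') ?_
      rw [Cnt_congr (σ := σ) (m := m + 2 + 1) (fun i _ => upd (by simp; omega) rfl)]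
      omega
    · have : i = 1 := by omega
      subst this
      refine PhInv.ph5a (U.update (by simp; omega) (by simp)) (upd (by simp) ht)
        (Function.update_self _ _ _) (upd (by simp) hs) (upd (by simp) hE') ?_
      rw [Cnt_congr (σ := σ) (m := 2) (fun i _ => upd (by simp; omega) rfl)]
      have hc' : 2 ^ 1 + Cnt n σ 2 ≤ j := hc
      omega

theorem next_ph4 (B : BS n σ V) (q i : ℕ) (U : Up n q σ) (hiq : i + 2 ≤ q)
      (ht : σ BV.t = BV.a (q + 1))
      (hT : ∀ k, 1 ≤ k → k < q → pT σ k) (hS : pS n σ q) (hs : ps n σ q)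
      (hl : ∀ k, k + 1 = q → pl n σ k) (hss : ∀ k, i < k → k + 2 ≤ q → ps n σ k)
      (hll : ∀ k, 1 ≤ k → k ≤ i → pl n σ k)
      (hE' : pE σ (q + 1)) (hc : 2 ^ q + Cnt n σ (q + 1) ≤ j) : Next n j σ V := by
  have hq := U.hq
  have hn := U.hn
  obtain ⟨hτ, hA, hup⟩ := up_val B U ht hE'
  have hAq : VA n V q = V BV.t := by rw [vS B hq (by omega) hS, hA]
  have hvT : ∀ k, 1 ≤ k → k < q → VA n V k = V BV.t - 2 ^ k + 5 / 4 := by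
    intro k h1 h2
    rw [vT B h1 (by omega) (hT k h1 h2)]
  have hvl : ∀ k, 1 ≤ k → k ≤ i → VB n V k = V BV.t - 2 * 2 ^ k + 5 / 4 := by
    intro k h1 h2
    rw [vl B h1 (by omega) (hll k h1 h2), hvT (k + 1) (by omega) (by omega), pow_succ]; ring
  have hvs : ∀ d k, k + d + 1 = q → i < k → V BV.t ≤ VB n V k := by
    intro d
    induction d with
    | zero =>
      intro k h1 h2
      rw [vl B (by omega) (by omega) (hl k h1), show k + 1 = q by omega, hAq]
    | succ d ih =>
      intro k h1 h2
      rw [vs B (by omega) (by omega) (hss k h2 (by omega))]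
      linarith [ih (k + 1) (by omega) (by omega)]
  have hot : OptAt n V BV.t := by
    apply optT
    intro k h1 h2
    rcases Nat.lt_or_ge q k with h | h
    · exact hup k h h2
    · rcases Nat.lt_or_ge k q with h' | h'
      · rw [hvT k h1 h']
        have := two_le_pow h1
        linarith
      · have : k = q := by omega
        subst this; exact hAq.le
  have hoa : ∀ k, 1 ≤ k → k ≤ i → OptAt n V (BV.a k) := by
    intro k h1 h2
    have a1 := hvT k h1 (by omega)
    have a2 := hvl k h1 h2
    have a3 := hvT (k + 1) (by omega) (by omega)
    have p := two_le_pow h1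
    rw [pow_succ] at a3
    apply optA <;> linarith
  rcases Nat.eq_zero_or_pos i with h0 | h0
  · subst h0
    have a1 := hvT 1 le_rfl (by omega)
    have a2 := hvs (q - 2) 1 (by omega) (by omega)
    rw [pow_one] at a1
    refine next_enter 1 le_rfl (by omega) hot (fun k a b => by omega) (by linarith) ?_
      (by linarith) ?_
    · right
      rcases Nat.lt_or_ge 2 q with h | h
      · rw [hvT (1 + 1) (by omega) h]; norm_num; linarith
      · have : q = 1 + 1 := by omega
        rw [← this, hAq]; linarith
    · have hEL : pE (Function.update σ (BV.a 1) (BV.b 1)) (q + 1) := upd (by simp; omega) hE'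
      have hT' : ∀ k, 2 ≤ k → k < q → pT (Function.update σ (BV.a 1) (BV.b 1)) k :=
        fun k a b => upd (by simp; omega) (hT k (by omega) b)
      have hS' : pS n (Function.update σ (BV.a 1) (BV.b 1)) q := upd (by simp; omega) hS
      have U' : Up n q (Function.update σ (BV.a 1) (BV.b 1)) := U.update (by simp; omega) (by simp)
      have hss' : ∀ k, 0 < k → k + 2 ≤ q → ps n (Function.update σ (BV.a 1) (BV.b 1)) k :=
        fun k a b => upd (by simp) (hss k a b)
      have hl' : ∀ k, k + 1 = q → pl n (Function.update σ (BV.a 1) (BV.b 1)) k :=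
        fun k a => upd (by simp) (hl k a)
      have hE1 : pE (Function.update σ (BV.a 1) (BV.b 1)) 1 := Function.update_self _ _ _
      refine PhInv.ph6 q hq hn (upd (by simp) ht) hE1 hEL ?_ ?_
      · intro k h1 h2
        rcases Nat.lt_or_ge q k with h | h
        · rcases Nat.lt_or_ge (q + 1) k with h' | h'
          · exact U'.loc k h' h2
          · have : k = q + 1 := by omega
            subst this
            exact Or.inl ⟨hEL, U'.bc⟩
        · rcases Nat.lt_or_ge k q with h' | h'
          · have hb : (pT (Function.update σ (BV.a 1) (BV.b 1)) (k + 1) ∧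
                ps n (Function.update σ (BV.a 1) (BV.b 1)) k) ∨
                (pS n (Function.update σ (BV.a 1) (BV.b 1)) (k + 1) ∧
                pl n (Function.update σ (BV.a 1) (BV.b 1)) k) := by
              rcases Nat.lt_or_ge (k + 1) q with h3 | h3
              · exact Or.inl ⟨hT' _ (by omega) h3, hss' k h1 h3⟩
              · have : k + 1 = q := by omega
                right
                refine ⟨?_, hl' k this⟩
                rw [this]; exact hS'
            by_cases hk : k = 1
            · subst hk
              refine Or.inl ⟨hE1, ?_⟩
              rcases hb with hb | hb
              · exact Or.inl ⟨by omega, hb⟩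
              · exact Or.inr ⟨Or.inr (Or.inr hb.1), hb.2⟩
            · exact Or.inr (Or.inr ⟨hT' k (by omega) h', by omega, hb⟩)
          · have : k = q := by omega
            subst this
            exact Or.inr (Or.inl ⟨hS', Or.inl ⟨by omega, hEL, upd (by simp) hs⟩⟩)
      · have c1 := Cnt_all (n := n) (σ := Function.update σ (BV.a 1) (BV.b 1)) 1 (by omega)
          (fun k a b => by
            have : k = 1 := by omega
            subst this; exact hE1)
        have c2 := Cnt_none (n := n) (σ := Function.update σ (BV.a 1) (BV.b 1)) 1 (q - 1) (by omega)
          (fun k a b => by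
            rcases Nat.lt_or_ge k q with h | h
            · exact fun h' => not_ET h' (hT' k (by omega) h)
            · have : k = q := by omega
              subst this; exact not_SE hS')
        rw [show 1 + (q - 1) = q by omega, Cnt_step (m := q) (by omega), if_pos hEL] at c2
        rw [Cnt_congr (σ := σ) (m := q + 1) (fun i _ => upd (by simp; omega) rfl)] at c2
        omega
  · have a1 := hvl i h0 le_rfl
    have a2 := hvs (q - (i + 2)) (i + 1) (by omega) (by omega)
    have a3 := vl B h0 (by omega) (hll i h0 le_rfl)
    have p := two_le_pow h0
    refine next_stay i h0 (by omega) hot (hoa i h0 le_rfl) (fun k h1 h2 => ⟨hoa k h1 h2.le, ?_⟩)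
      (by linarith) a3.ge ?_
    · have b1 := hvl k h1 h2.le
      have b2 := hvl (k + 1) (by omega) h2
      have b3 := vl B h1 (by omega) (hll k h1 h2.le)
      have p := two_le_pow h1
      rw [pow_succ] at b2
      apply optB <;> linarith
    · obtain ⟨m, rfl⟩ : ∃ m, i = m + 1 := ⟨i - 1, by omega⟩
      refine PhInv.ph4 q m (U.update (by simp) (by simp; omega)) (by omega)
        (upd (by simp) ht) (fun k a b => upd (by simp) (hT k a b)) (upd (by simp) hS)
        (upd (by simp; omega) hs) (fun k a => upd (by simp; omega) (hl k a)) (fun k a b => ?_)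
        (fun k a b => upd (by simp; omega) (hll k a (by omega))) (upd (by simp) hE') ?_
      · by_cases hk : k = m + 1
        · subst hk; exact Function.update_self _ _ _
        · exact upd (by simpa using hk) (hss k (by omega) b)
      · rw [Cnt_congr (σ := σ) (m := q + 1) (fun i _ => upd (by simp) rfl)]
        omega

theorem next_ph5a (B : BS n σ V) (U : Up n 1 σ) (ht : σ BV.t = BV.a 2)
      (hS : pS n σ 1) (hs : ps n σ 1) (hE' : pE σ 2) (hc : 2 ^ 1 + Cnt n σ 2 ≤ j) :
      Next n j σ V := by
  have hn := U.hn
  obtain ⟨hτ, hA, hup⟩ := up_val B U ht hE'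
  have e1 := vS B le_rfl (by omega) hS
  have e2 := vs B le_rfl (by omega) hs
  refine next_leave 1 le_rfl (by omega) ?_ ?_ (fun k a b => by omega) (by linarith) e2.ge ?_
  · apply optT
    intro k h1 h2
    rcases Nat.lt_or_ge 1 k with h | h
    · exact hup k h h2
    · have : k = 1 := by omega
      subst this; linarith
  · apply optA <;> linarith
  · refine PhInv.ph5b (U.update (by simp) (by simp; omega)) (upd (by simp) ht)
      (upd (by simp) hS) (Function.update_self _ _ _) (upd (by simp) hE') ?_
    rw [Cnt_congr (σ := σ) (m := 2) (fun i _ => upd (by simp) rfl)]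
    omega

theorem next_ph5b (B : BS n σ V) (U : Up n 1 σ) (ht : σ BV.t = BV.a 2)
      (hS : pS n σ 1) (hs : pl n σ 1) (hE' : pE σ 2) (hc : 2 ^ 1 + Cnt n σ 2 ≤ j) :
      Next n j σ V := by
  have hn := U.hn
  obtain ⟨hτ, hA, hup⟩ := up_val B U ht hE'
  have e1 := vS B le_rfl (by omega) hS
  have e2 := vl B le_rfl (by omega) hs
  refine next_enter 1 le_rfl (by omega) ?_ (fun k a b => by omega) (by linarith) (Or.inl e1.ge)
    (by linarith) ?_
  · apply optT
    intro k h1 h2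
    rcases Nat.lt_or_ge 1 k with h | h
    · exact hup k h h2
    · have : k = 1 := by omega
      subst this; linarith
  · have U' : Up n 1 (Function.update σ (BV.a 1) (BV.b 1)) := U.update (by simp; omega) (by simp)
    have hE1 : pE (Function.update σ (BV.a 1) (BV.b 1)) 1 := Function.update_self _ _ _
    have hE2 : pE (Function.update σ (BV.a 1) (BV.b 1)) 2 := upd (by simp) hE'
    refine PhInv.ph6 1 le_rfl hn (upd (by simp) ht) hE1 hE2 ?_ ?_
    · intro k h1 h2
      rcases Nat.lt_or_ge 2 k with h | h
      · exact U'.loc k h h2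
      · have : k = 1 ∨ k = 2 := by omega
        rcases this with rfl | rfl
        · exact Or.inl ⟨hE1, Or.inr ⟨Or.inr (Or.inl hE2), upd (by simp) hs⟩⟩
        · exact Or.inl ⟨hE2, U'.bc⟩
    · have c1 := Cnt_all (n := n) (σ := Function.update σ (BV.a 1) (BV.b 1)) 2 (by omega)
          (fun k a b => by
            have : k = 1 ∨ k = 2 := by omega
            rcases this with rfl | rfl
            · exact hE1
            · exact hE2)
      rw [Cnt_congr (σ := σ) (m := 2) (fun i _ => upd (by simp; omega) rfl)] at c1
      omega

theorem next_ph6 (B : BS n σ V) (q : ℕ) (hq : 1 ≤ q) (hn : q + 1 ≤ n)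
      (ht : σ BV.t = BV.a (q + 1))
      (hE : pE σ 1) (hE' : pE σ (q + 1)) (hL : ∀ i, 1 ≤ i → i ≤ n → Loc n σ i)
      (hc : Cnt n σ 0 ≤ j) : Next n j σ V := by
  have e1 := vE B le_rfl (by omega) hE
  have e2 := vt B hn ht
  have hb : Bcond n σ 1 := by
    rcases hL 1 le_rfl (by omega) with h | h | h
    · exact h.2
    · exact absurd hE (not_SE h.1)
    · exact absurd h.1 (not_ET hE)
  have hQ : ∀ k, 1 < k → k ≤ n → VA n V k ≤ VB n V 1 ∨ VA n V k = V BV.t - 2 ^ k + 5 / 4 :=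
    fun k a b => Q_B B le_rfl (by omega) (fun i a b => hL i (by omega) b) hb a b
  have e3 : VA n V (q + 1) ≤ VB n V 1 := by
    rcases hQ (q + 1) (by omega) hn with h | h
    · exact h
    · have := two_le_pow (i := q + 1) (by omega)
      linarith
  refine next_travel 1 le_rfl (by omega) (by linarith) ?_ ?_
  · intro k h1 h2 h3
    right
    refine ⟨?_, by omega⟩
    rcases hQ k (by omega) h2 with h | h
    · linarith
    · have := two_le_pow h1
      linarith
  · refine canon_inv (Function.update_self _ _ _) (upd (by simp) hE) (fun i a b => ?_) ?_
    · exact Loc_congr (upd (by simp) rfl) (upd (by simp) rfl) (upd (by simp) rfl) (hL i a b)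
    · rw [Cnt_congr (σ := σ) (m := 0) (fun i _ => upd (by simp) rfl)]
      omega

theorem phinv_next (hn : 1 ≤ n) (B : BS n σ V) (h : PhInv n j σ) :
    2 ^ n ≤ j + 1 ∨ Next n j σ V := by
  cases h with
  | big h => exact Or.inl h
  | init => exact Or.inr (next_init hn B)
  | ph0 q hq hn ht hE hl hS hs hE' hL hc => exact Or.inr (next_ph0 B q hq hn ht hE hl hS hs hE' hL hc)
  | ph1a q U ht hE hl hS hl' hc => exact Or.inr (next_ph1a B q U ht hE hl hS hl' hc)
  | ph1b q U ht hE hl hs hS hc => exact Or.inr (next_ph1b B q U ht hE hl hs hS hc)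
  | ph2 q U ht hE hl hs hE' hc => exact Or.inr (next_ph2 B q U ht hE hl hs hE' hc)
  | ph3 q i U hi hiq ht hT hE hl hs hE' hc =>
    exact Or.inr (next_ph3 B q i U hi hiq ht hT hE hl hs hE' hc)
  | ph4 q i U hiq ht hT hS hs hl hss hll hE' hc =>
    exact Or.inr (next_ph4 B q i U hiq ht hT hS hs hl hss hll hE' hc)
  | ph5a U ht hS hs hE' hc => exact Or.inr (next_ph5a B U ht hS hs hE' hc)
  | ph5b U ht hS hs hE' hc => exact Or.inr (next_ph5b B U ht hS hs hE' hc)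
  | ph6 q hq hn ht hE hE' hL hc => exact Or.inr (next_ph6 B q hq hn ht hE hE' hL hc)

end phases2

/-- A switch that both Bland-like and greedy lexicographic rules may choose. -/
structure Good (n : ℕ) (V : BV → ℚ) (v w : BV) : Prop where
  edge : BEdge n v w
  pos : 0 < zV n V v w
  low : ∀ u, IsBVertex n u → NV n u < NV n v → OptAt n V u
  choice : (∀ w', BEdge n v w' → zV n V v w' ≤ zV n V v w) ∨
    (∀ w', BEdge n v w' → 0 < zV n V v w' → NB n v w ≤ NB n v w')

theorem good_step {n j : ℕ} {σ : BV → BV} {V : BV → ℚ} (hn : 1 ≤ n) (B : BS n σ V)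
    (h : PhInv n j σ) {v w : BV} (G : Good n V v w) : PhInv n (j + 1) (Function.update σ v w) := by
  rcases phinv_next hn B h with h | ⟨v0, w0, he, hz, hlow, hoth, hI⟩
  · exact PhInv.big (by omega)
  · have hv : v = v0 := by
      apply NV_inj G.edge.src he.src
      rcases lt_trichotomy (NV n v) (NV n v0) with h | h | h
      · exact absurd G.pos (not_lt.2 (hlow v G.edge.src h w G.edge))
      · exact h
      · exact absurd hz (not_lt.2 (G.low v0 he.src h w0 he))
    subst hv
    have hw : w = w0 := by
      by_contra hne
      rcases hoth w G.edge hne with h | ⟨h1, h2⟩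
      · exact absurd G.pos (not_lt.2 h)
      · rcases G.choice with hc | hc
        · have := hc w0 he; linarith
        · have := hc w0 he hz; omega
    subst hw
    exact hI

theorem term_bound {n j : ℕ} {σ : BV → BV} {V : BV → ℚ} (hn : 1 ≤ n) (B : BS n σ V)
    (h : PhInv n j σ) (ho : ∀ u w, BEdge n u w → zV n V u w ≤ 0) : 2 ^ n ≤ j + 1 := by
  rcases phinv_next hn B h with h | ⟨v0, w0, he, hz, _⟩
  · exact h
  · exact absurd hz (not_lt.2 (ho v0 w0 he))

/-! ### Policies of `𝔇_n` -/

structure DS (n : ℕ) (σ : BV → BV) (X : BV → BV → Prop) (π : DV → DV) : Prop where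
  base : ∀ v, IsBVertex n v → v ≠ BV.s → π (DV.base v) = DV.x v (σ v)
  sink : π (DV.base BV.s) = DV.base BV.s
  x1 : ∀ v w, DEdgePair n v w → X v w → π (DV.x v w) = DV.y v w
  x0 : ∀ v w, DEdgePair n v w → ¬ X v w → π (DV.x v w) = DV.base v
  zz : ∀ v w, DEdgePair n v w → π (DV.z v w) = DV.base w
  act : ∀ v, IsBVertex n v → v ≠ BV.s → X v (σ v)

open Classical in
noncomputable def DW (n : ℕ) (p : BV → ℚ) (X : BV → BV → Prop) (V : BV → ℚ) : DV → ℚ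
  | DV.base v => if IsBVertex n v then V v else 0
  | DV.x v w => if DEdgePair n v w then (if X v w then V v + p v * zV n V v w else V v) else 0
  | DV.y v w => if DEdgePair n v w then V v + p v * zV n V v w else 0
  | DV.z v w => if DEdgePair n v w then rB n v w + V w else 0

section D
variable {n : ℕ} {p : BV → ℚ} {σ : BV → BV} {V : BV → ℚ} {X : BV → BV → Prop} {π : DV → DV}

theorem DW_base {v : BV} (h : IsBVertex n v) : DW n p X V (DV.base v) = V v := by
  simp [DW, h]
theorem DW_y {v w : BV} (h : DEdgePair n v w) :
    DW n p X V (DV.y v w) = V v + p v * zV n V v w := by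
  simp [DW, h]
theorem DW_z {v w : BV} (h : DEdgePair n v w) :
    DW n p X V (DV.z v w) = rB n v w + V w := by
  simp [DW, h]
theorem DW_x1 {v w : BV} (h : DEdgePair n v w) (hX : X v w) :
    DW n p X V (DV.x v w) = V v + p v * zV n V v w := by
  simp [DW, h, hX]
theorem DW_x0 {v w : BV} (h : DEdgePair n v w) (hX : ¬ X v w) :
    DW n p X V (DV.x v w) = V v := by
  simp [DW, h, hX]

theorem DW_isVal (B : BS n σ V) (D : DS n σ X π) : IsDVal n p π (DW n p X V) := by
  refine ⟨?_, ?_, ?_⟩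
  · rw [DW_base (v := BV.s) (show IsBVertex n BV.s from trivial), B.vs]
  · intro u hu
    cases u with
    | base v =>
      have hv : IsBVertex n v := hu
      by_cases hs : v = BV.s
      · subst hs; rw [D.sink]; simp [rD]
      · have he : DEdgePair n v (σ v) := ⟨B.pol v hv, hs⟩
        rw [D.base v hv hs, DW_base hv, DW_x1 he (D.act v hv hs), B.z_act hv]; simp [rD]
    | x v w =>
      have he : DEdgePair n v w := hu
      by_cases hX : X v w
      · rw [D.x1 v w he hX, DW_x1 he hX, DW_y he]; simp [rD]
      · rw [D.x0 v w he hX, DW_x0 he hX, DW_base he.1.src]; simp [rD]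
    | y v w => exact absurd hu id
    | z v w =>
      have he : DEdgePair n v w := hu
      rw [D.zz v w he, DW_z he, DW_base he.1.tgt]; simp [rD]
  · intro v w he
    rw [DW_y he, DW_z he, DW_base he.1.src]
    unfold zV; ring

theorem DW_unique (hp : ∀ v, p v ≠ 0) (B : BS n σ V) (D : DS n σ X π) {W : DV → ℚ}
    (hW : IsDVal n p π W) (h0 : ∀ u, ¬ IsDVertex n u → W u = 0) : W = DW n p X V := by
  obtain ⟨w0, w1, w2⟩ := hW
  have hbase : ∀ v, Reaches σ v → IsBVertex n v → W (DV.base v) = V v := by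
    intro v hr
    induction hr with
    | base => intro _; rw [w0, B.vs]
    | step v _ ih =>
      intro hv
      by_cases hs : v = BV.s
      · subst hs; rw [w0, B.vs]
      have he : DEdgePair n v (σ v) := ⟨B.pol v hv, hs⟩
      have e1 := w1 (DV.base v) hv
      rw [D.base v hv hs] at e1
      have e2 := w1 (DV.x v (σ v)) he
      rw [D.x1 v _ he (D.act v hv hs)] at e2
      have e3 := w2 v (σ v) he
      have e4 := w1 (DV.z v (σ v)) he
      rw [D.zz v _ he, ih he.1.tgt] at e4
      simp only [rD, zero_add, if_true] at e1 e2 e4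
      have e5 : p v * (W (DV.base v) - W (DV.z v (σ v))) = 0 := by
        rw [e2, e3] at e1; linarith
      rcases mul_eq_zero.1 e5 with h | h
      · exact absurd h (hp v)
      · rw [B.bell v hv]; linarith
  have hb : ∀ v, IsBVertex n v → W (DV.base v) = V v := fun v hv => hbase v (B.reach v hv) hv
  have hz : ∀ v w, DEdgePair n v w → W (DV.z v w) = rB n v w + V w := by
    intro v w he
    have e4 := w1 (DV.z v w) he
    rw [D.zz v _ he, hb w he.1.tgt] at e4
    simpa [rD] using e4
  have hy : ∀ v w, DEdgePair n v w → W (DV.y v w) = V v + p v * zV n V v w := by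
    intro v w he
    rw [w2 v w he, hz v w he, hb v he.1.src]; unfold zV; ring
  funext u
  cases u with
  | base v =>
    by_cases hv : IsBVertex n v
    · rw [hb v hv, DW_base hv]
    · rw [h0 (DV.base v) hv]; simp [DW, hv]
  | x v w =>
    by_cases he : DEdgePair n v w
    · have e := w1 (DV.x v w) he
      by_cases hX : X v w
      · rw [D.x1 v w he hX, hy v w he] at e
        rw [DW_x1 he hX, e]; simp [rD]
      · rw [D.x0 v w he hX, hb v he.1.src] at e
        rw [DW_x0 he hX, e]; simp [rD]
    · rw [h0 (DV.x v w) he]; simp [DW, he]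
  | y v w =>
    by_cases he : DEdgePair n v w
    · rw [hy v w he, DW_y he]
    · rw [h0 (DV.y v w) he]; simp [DW, he]
  | z v w =>
    by_cases he : DEdgePair n v w
    · rw [hz v w he, DW_z he]
    · rw [h0 (DV.z v w) he]; simp [DW, he]

theorem DVal_eq (hp : ∀ v, p v ≠ 0) (B : BS n σ V) (D : DS n σ X π) :
    DVal n p π = DW n p X V := by
  have hex : ∃! W : DV → ℚ, IsDVal n p π W ∧ ∀ u, ¬ IsDVertex n u → W u = 0 := by
    refine ⟨DW n p X V, ⟨DW_isVal B D, ?_⟩, ?_⟩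
    · intro u hu
      cases u <;> simp only [IsDVertex] at hu <;> simp [DW, hu]
    · rintro W ⟨h1, h2⟩; exact DW_unique hp B D h1 h2
  unfold DVal
  rw [dif_pos hex]
  obtain ⟨h1, h2⟩ := hex.exists.choose_spec
  exact DW_unique hp B D h1 h2

/-- classification of improving switches -/
theorem improving_cases (hp : ∀ v, 0 < p v) (B : BS n σ V) (D : DS n σ X π) {u u' : DV}
    (h : DImproving n p π u u') : ∃ v w, DEdgePair n v w ∧
      ((u = DV.x v w ∧ u' = DV.y v w ∧ ¬ X v w ∧ 0 < zV n V v w ∧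
          zD n p π u u' = p v * zV n V v w) ∨
       (u = DV.base v ∧ u' = DV.x v w ∧ X v w ∧ 0 < zV n V v w ∧
          zD n p π u u' = p v * zV n V v w) ∨
       (u = DV.x v w ∧ u' = DV.base v ∧ X v w ∧ zV n V v w < 0 ∧
          zD n p π u u' = - (p v * zV n V v w))) := by
  obtain ⟨he, hz⟩ := h
  have hV := DVal_eq (p := p) (fun v => (hp v).ne') B D
  rcases he with ⟨v, w, he, ⟨rfl, rfl⟩ | ⟨rfl, rfl⟩ | ⟨rfl, rfl⟩ | ⟨rfl, rfl⟩⟩ | ⟨rfl, rfl⟩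
  · refine ⟨v, w, he, Or.inr (Or.inl ⟨rfl, rfl, ?_⟩)⟩
    unfold zD at hz ⊢
    rw [hV, DW_base he.1.src] at hz ⊢
    by_cases hX : X v w
    · rw [DW_x1 he hX] at hz ⊢
      simp only [rD, zero_add] at hz ⊢
      have : 0 < p v * zV n V v w := by linarith
      exact ⟨hX, pos_of_mul_pos_right this (hp v).le, by ring⟩
    · rw [DW_x0 he hX] at hz
      simp [rD] at hz
  · refine ⟨v, w, he, Or.inr (Or.inr ⟨rfl, rfl, ?_⟩)⟩
    unfold zD at hz ⊢
    rw [hV, DW_base he.1.src] at hz ⊢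
    by_cases hX : X v w
    · rw [DW_x1 he hX] at hz ⊢
      simp only [rD, zero_add] at hz ⊢
      have : 0 < p v * (- zV n V v w) := by linarith
      have := pos_of_mul_pos_right this (hp v).le
      exact ⟨hX, by linarith, by ring⟩
    · rw [DW_x0 he hX] at hz
      simp [rD] at hz
  · refine ⟨v, w, he, Or.inl ⟨rfl, rfl, ?_⟩⟩
    unfold zD at hz ⊢
    rw [hV, DW_y he] at hz ⊢
    by_cases hX : X v w
    · rw [DW_x1 he hX] at hz
      simp [rD] at hz
    · rw [DW_x0 he hX] at hz ⊢
      simp only [rD, zero_add] at hz ⊢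
      have : 0 < p v * zV n V v w := by linarith
      exact ⟨hX, pos_of_mul_pos_right this (hp v).le, by ring⟩
  · exfalso
    unfold zD at hz
    rw [hV, DW_z he, DW_base he.1.tgt] at hz
    simp [rD] at hz
  · exfalso
    unfold zD at hz
    simp [rD] at hz

theorem improving_A (hp : ∀ v, 0 < p v) (B : BS n σ V) (D : DS n σ X π) {v w : BV}
    (he : DEdgePair n v w) (hX : ¬ X v w) (hz : 0 < zV n V v w) :
    DImproving n p π (DV.x v w) (DV.y v w) ∧
      zD n p π (DV.x v w) (DV.y v w) = p v * zV n V v w := by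
  have hV := DVal_eq (p := p) (fun v => (hp v).ne') B D
  have : zD n p π (DV.x v w) (DV.y v w) = p v * zV n V v w := by
    unfold zD; rw [hV, DW_y he, DW_x0 he hX]; simp [rD]
  refine ⟨⟨Or.inl ⟨v, w, he, Or.inr (Or.inr (Or.inl ⟨rfl, rfl⟩))⟩, ?_⟩, this⟩
  rw [this]; exact mul_pos (hp v) hz

theorem improving_B (hp : ∀ v, 0 < p v) (B : BS n σ V) (D : DS n σ X π) {v w : BV}
    (he : DEdgePair n v w) (hX : X v w) (hz : 0 < zV n V v w) :
    DImproving n p π (DV.base v) (DV.x v w) ∧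
      zD n p π (DV.base v) (DV.x v w) = p v * zV n V v w := by
  have hV := DVal_eq (p := p) (fun v => (hp v).ne') B D
  have : zD n p π (DV.base v) (DV.x v w) = p v * zV n V v w := by
    unfold zD; rw [hV, DW_base he.1.src, DW_x1 he hX]; simp [rD]
  refine ⟨⟨Or.inl ⟨v, w, he, Or.inl ⟨rfl, rfl⟩⟩, ?_⟩, this⟩
  rw [this]; exact mul_pos (hp v) hz

theorem DS_A (D : DS n σ X π) (v w : BV) :
    DS n σ (fun a b => X a b ∨ (a = v ∧ b = w)) (Function.update π (DV.x v w) (DV.y v w)) := by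
  constructor
  · intro a h1 h2; rw [Function.update_of_ne (by simp)]; exact D.base a h1 h2
  · rw [Function.update_of_ne (by simp)]; exact D.sink
  · intro a b h1 h2
    by_cases h : a = v ∧ b = w
    · obtain ⟨rfl, rfl⟩ := h; rw [Function.update_self]
    · rw [Function.update_of_ne (by simpa using h)]
      exact D.x1 a b h1 (by tauto)
  · intro a b h1 h2
    have h : ¬ (a = v ∧ b = w) := by tauto
    rw [Function.update_of_ne (by simpa using h)]
    exact D.x0 a b h1 (by tauto)
  · intro a b h1; rw [Function.update_of_ne (by simp)]; exact D.zz a b h1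
  · intro a h1 h2; exact Or.inl (D.act a h1 h2)

theorem DS_R (D : DS n σ X π) (v w : BV) (hw : w ≠ σ v) :
    DS n σ (fun a b => X a b ∧ ¬ (a = v ∧ b = w)) (Function.update π (DV.x v w) (DV.base v)) := by
  constructor
  · intro a h1 h2; rw [Function.update_of_ne (by simp)]; exact D.base a h1 h2
  · rw [Function.update_of_ne (by simp)]; exact D.sink
  · intro a b h1 h2
    rw [Function.update_of_ne (by simpa using h2.2)]
    exact D.x1 a b h1 h2.1
  · intro a b h1 h2
    by_cases h : a = v ∧ b = w
    · obtain ⟨rfl, rfl⟩ := h; rw [Function.update_self]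
    · rw [Function.update_of_ne (by simpa using h)]
      exact D.x0 a b h1 (by tauto)
  · intro a b h1; rw [Function.update_of_ne (by simp)]; exact D.zz a b h1
  · intro a h1 h2
    refine ⟨D.act a h1 h2, ?_⟩
    rintro ⟨rfl, h⟩; exact hw h.symm

theorem DS_B (D : DS n σ X π) (v w : BV) (hs : v ≠ BV.s) (hX : X v w) :
    DS n (Function.update σ v w) X (Function.update π (DV.base v) (DV.x v w)) := by
  constructor
  · intro a h1 h2
    by_cases h : a = v
    · subst h; rw [Function.update_self, Function.update_self]
    · rw [Function.update_of_ne (by simpa using h), Function.update_of_ne h]; exact D.base a h1 h2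
  · rw [Function.update_of_ne (by simpa using hs.symm)]; exact D.sink
  · intro a b h1 h2
    rw [Function.update_of_ne (by simp)]
    exact D.x1 a b h1 h2
  · intro a b h1 h2
    rw [Function.update_of_ne (by simp)]
    exact D.x0 a b h1 h2
  · intro a b h1; rw [Function.update_of_ne (by simp)]; exact D.zz a b h1
  · intro a h1 h2
    by_cases h : a = v
    · subst h; rw [Function.update_self]; exact hX
    · rw [Function.update_of_ne h]; exact D.act a h1 h2

theorem DS_init (n : ℕ) (σ : BV → BV) : DS n σ (fun v w => w = σ v) (twin σ) := by
  constructor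
  · intro v _ hs; simp [twin, hs]
  · simp [twin]
  · intro v w _ h; simp [twin, h]
  · intro v w _ h; simp [twin, h]
  · intro v w _; simp [twin]
  · intro v _ _; rfl

end D

theorem BS_init (n : ℕ) (hn : 1 ≤ n) : BS n (pi0 n) (fun _ => 0) := by
  have hr : ∀ d i, i + d = n + 1 → 1 ≤ i → Reaches (pi0 n) (aN n i) := by
    intro d
    induction d with
    | zero => intro i h1 _; have : i = n + 1 := by omega
              rw [this, aN_top]; exact Reaches.base
    | succ d ih =>
      intro i h1 h2
      rw [aN_le (by omega)]
      exact Reaches.step _ (ih (i + 1) (by omega) (by omega))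
  have hr' : ∀ i, 1 ≤ i → i ≤ n + 1 → Reaches (pi0 n) (aN n i) :=
    fun i h1 h2 => hr (n + 1 - i) i (by omega) h1
  constructor
  · intro u hu
    cases u with
    | t => exact edge_ta le_rfl hn
    | s => exact edge_ss n
    | d => exact edge_ds n
    | a i => exact edge_aa hu.1 hu.2
    | b i => exact edge_ba hu.1 hu.2
  · intro u hu
    cases u with
    | t => apply Reaches.step
           have := hr' 1 le_rfl (by omega)
           rwa [aN_le hn] at this
    | s => exact Reaches.base
    | d => exact Reaches.step _ Reaches.base
    | a i => exact Reaches.step _ (hr' (i + 1) (by omega) (by have := hu.2; omega))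
    | b i => exact Reaches.step _ (hr' (i + 1) (by omega) (by have := hu.2; omega))
  · rfl
  · intro u hu
    cases u with
    | t => simp [pi0, rB]
    | s => simp [pi0, rB]
    | d => simp [pi0, rB]
    | a i => simp [pi0, rB_aa]
    | b i => simp [pi0, rB_ba]
  · intro _ _; exact le_rfl

/-! ### The probabilities -/

theorem pSpec_pos (n : ℕ) (v : BV) : 0 < pSpec n v := by unfold pSpec; positivity

theorem pSpec_lt {n : ℕ} {u v : BV} (h : NV n u < NV n v) :
    pSpec n v * 2 ^ (n + 5) ≤ pSpec n u := by
  unfold pSpec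
  rw [← zpow_natCast, ← zpow_add₀ (by norm_num)]
  apply zpow_le_zpow_right₀ (by norm_num)
  have : NV n u * (n + 5) + (n + 5) ≤ NV n v * (n + 5) := by nlinarith
  have h2 : ((NV n u * (n + 5) + (n + 5) : ℕ) : ℤ) ≤ ((NV n v * (n + 5) : ℕ) : ℤ) := by
    exact_mod_cast this
  push_cast at h2 ⊢
  linarith

theorem pSpec_le {n : ℕ} {v : BV} (h : IsBVertex n v) : pSpec n v * 2 ^ (n + 5) ≤ 1 := by
  unfold pSpec
  have h1 : 1 ≤ NV n v := by
    cases v <;> simp only [NV, IsBVertex] at * <;> omega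
  rw [← zpow_natCast, ← zpow_add₀ (by norm_num)]
  rw [← zpow_zero (2:ℚ)]
  apply zpow_le_zpow_right₀ (by norm_num)
  have : (n + 5) ≤ NV n v * (n + 5) := by nlinarith
  have h2 : ((n + 5 : ℕ) : ℤ) ≤ ((NV n v * (n + 5) : ℕ) : ℤ) := by
    exact_mod_cast this
  push_cast at h2 ⊢
  linarith

section cost
variable {n : ℕ} {σ : BV → BV} {V : BV → ℚ}

theorem cost_lt (B : BS n σ V) {u u' v v' : BV} (he : BEdge n u u') (hz : 0 < zV n V u u')
    (he' : BEdge n v v') (hlt : NV n u < NV n v) :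
    pSpec n v * |zV n V v v'| < pSpec n u * zV n V u u' := by
  have h1 := B.z_pos he hz
  have h2 := B.abs_z he'
  have h3 := pSpec_lt hlt
  have h4 := pSpec_pos n v
  have h5 := pSpec_pos n u
  have h6 : (2:ℚ) ^ (n + 5) = 8 * 2 ^ (n + 2) := by ring
  have h7 : pSpec n v * |zV n V v v'| ≤ pSpec n v * 2 ^ (n + 2) := by gcongr
  have h8 : pSpec n u * (1 / 4) ≤ pSpec n u * zV n V u u' := by gcongr
  rw [h6] at h3
  linarith

theorem cost_small (B : BS n σ V) {v v' : BV} (he' : BEdge n v v') :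
    pSpec n v * |zV n V v v'| < 1 / 4 := by
  have h2 := B.abs_z he'
  have h3 := pSpec_le he'.src
  have h4 := pSpec_pos n v
  have h6 : (2:ℚ) ^ (n + 5) = 8 * 2 ^ (n + 2) := by ring
  have h7 : pSpec n v * |zV n V v v'| ≤ pSpec n v * 2 ^ (n + 2) := by gcongr
  rw [h6] at h3
  linarith
end cost

/-! ### Bland and Dantzig -/

/-- The combined state of the run on `𝔇_n`. -/
def Kst (n : ℕ) (k : ℕ) (π : DV → DV) : Prop :=
  ∃ σ V X j, DS n σ X π ∧ BS n σ V ∧ PhInv n j σ ∧ j ≤ k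

theorem Kst_init (n : ℕ) (hn : 1 ≤ n) : Kst n 0 (twin (pi0 n)) :=
  ⟨pi0 n, fun _ => 0, _, 0, DS_init n _, BS_init n hn, PhInv.init, le_rfl⟩

theorem zss {n : ℕ} {V : BV → ℚ} {w : BV} (h : BEdge n BV.s w) : zV n V BV.s w = 0 := by
  rw [h.from_s]; simp [zV, rB]

theorem Kst_term {n k : ℕ} (hn : 1 ≤ n) {π : DV → DV} (h : Kst n k π)
    (ht : ∀ u u', ¬ DImproving n (pSpec n) π u u') : 2 ^ n - 1 ≤ k := by
  obtain ⟨σ, V, X, j, D, B, hI, hj⟩ := h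
  have := term_bound hn B hI (by
    intro u w he
    by_contra hz
    push Not at hz
    by_cases hs : u = BV.s
    · subst hs; rw [zss he] at hz; exact lt_irrefl _ hz
    by_cases hX : X u w
    · exact ht _ _ (improving_B (pSpec_pos n) B D ⟨he, hs⟩ hX hz).1
    · exact ht _ _ (improving_A (pSpec_pos n) B D ⟨he, hs⟩ hX hz).1)
  omega

/-- lower and upper bounds on the numbers of the edges leaving a vertex -/
def NBlo (n : ℕ) : BV → ℕ
  | BV.t => 0
  | BV.a i => n + 1 + 5 * (i - 1)
  | BV.b i => n + 4 + 5 * (i - 1)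
  | BV.d => 6 * n + 1
  | BV.s => 6 * n + 2

def NBhi (n : ℕ) : BV → ℕ
  | BV.t => n
  | BV.a i => n + 3 + 5 * (i - 1)
  | BV.b i => n + 5 + 5 * (i - 1)
  | BV.d => 6 * n + 1
  | BV.s => 6 * n + 2

theorem NB_bounds {n : ℕ} {v v' : BV} (he : BEdge n v v') :
    NBlo n v ≤ NB n v v' ∧ NB n v v' ≤ NBhi n v := by
  have ha : ∀ i j, NB n (BV.a i) (aN n j) = n + 2 + 5 * (i - 1) := by
    intro i j; unfold aN; split_ifs <;> rfl
  have hb : ∀ i j, NB n (BV.b i) (aN n j) = n + 5 + 5 * (i - 1) := by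
    intro i j; unfold aN; split_ifs <;> rfl
  have hb' : ∀ i j, NB n (BV.b i) (bN n j) = n + 4 + 5 * (i - 1) := by
    intro i j; unfold bN; split_ifs <;> rfl
  refine BEdge.elim (P := fun v v' => NBlo n v ≤ NB n v v' ∧ NB n v v' ≤ NBhi n v) he
    ?_ ?_ ?_ ?_ ?_ ?_ ?_ ?_
  · intro i h1 h2; simp only [NBlo, NBhi, NB]; omega
  · intro i h1 h2; simp only [NBlo, NBhi, NB]; omega
  · intro i h1 h2; simp only [NBlo, NBhi, ha]; omega
  · intro i h1 h2; simp only [NBlo, NBhi, NB]; omega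
  · intro i h1 h2; simp only [NBlo, NBhi, hb']; omega
  · intro i h1 h2; simp only [NBlo, NBhi, hb]; omega
  · simp only [NBlo, NBhi, NB]; omega
  · simp only [NBlo, NBhi, NB]; omega

theorem NB_mono {n : ℕ} {u u' v v' : BV} (he : BEdge n u u') (he' : BEdge n v v')
    (hlt : NV n u < NV n v) : NB n u u' < NB n v v' := by
  have h1 := (NB_bounds he).2
  have h2 := (NB_bounds he').1
  have h3 := he.src
  have h4 := he'.src
  refine lt_of_le_of_lt h1 (lt_of_lt_of_le ?_ h2)
  cases u <;> cases v <;> simp only [NV, NBlo, NBhi, IsBVertex] at * <;> omega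

theorem step_general {n k : ℕ} (hn : 1 ≤ n) {σ : BV → BV} {V : BV → ℚ} {X : BV → BV → Prop}
    {π : DV → DV} {j : ℕ} (D : DS n σ X π) (B : BS n σ V) (hI : PhInv n j σ) (hj : j ≤ k)
    {u u' : DV} (h : DImproving n (pSpec n) π u u')
    (hG : ∀ v w, u = DV.base v → u' = DV.x v w → DEdgePair n v w → X v w →
      0 < zV n V v w → zD n (pSpec n) π u u' = pSpec n v * zV n V v w → Good n V v w) :
    Kst n (k + 1) (Function.update π u u') := by
  obtain ⟨v, w, he, ⟨rfl, rfl, hX, hz, hc⟩ | ⟨rfl, rfl, hX, hz, hc⟩ | ⟨rfl, rfl, hX, hz, hc⟩⟩ :=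
    improving_cases (pSpec_pos n) B D h
  · exact ⟨σ, V, _, j, DS_A D v w, B, hI, by omega⟩
  · have G := hG v w rfl rfl he hX hz hc
    obtain ⟨V', B', _⟩ := B.switch he.1 hz
    exact ⟨_, V', X, j + 1, DS_B D v w he.2 hX, B', good_step hn B hI G, by omega⟩
  · have hw : w ≠ σ v := by
      rintro rfl
      rw [B.z_act he.1.src] at hz; exact lt_irrefl _ hz
    exact ⟨σ, V, _, j, DS_R D v w hw, B, hI, by omega⟩

theorem run_bound {n : ℕ} (hn : 1 ≤ n) (R : (DV → DV) → (DV → DV) → Prop)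
    (hR : ∀ k π π', Kst n k π → R π π' → Kst n (k + 1) π')
    (f : ℕ → (DV → DV)) (m : ℕ) (h0 : f 0 = twin (pi0 n)) (hs : ∀ k < m, R (f k) (f (k + 1)))
    (ht : ∀ u u', ¬ DImproving n (pSpec n) (f m) u u') : 2 ^ n - 1 ≤ m := by
  have : ∀ k, k ≤ m → Kst n k (f k) := by
    intro k
    induction k with
    | zero => intro _; rw [h0]; exact Kst_init n hn
    | succ k ih => intro hk; exact hR k _ _ (ih (by omega)) (hs k (by omega))
  exact Kst_term hn (this m le_rfl) ht

theorem bland_step {n k : ℕ} (hn : 1 ≤ n) {N : DV → DV → ℕ} (hN : IsDBlandNumbering n N)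
    {π π' : DV → DV} (K : Kst n k π) (h : IsBlandStepD n (pSpec n) N π π') : Kst n (k + 1) π' := by
  obtain ⟨σ, V, X, j, D, B, hI, hj⟩ := K
  obtain ⟨u, u', hi, hmin, rfl⟩ := h
  refine step_general hn D B hI hj hi ?_
  rintro v w rfl rfl he hX hz _
  obtain ⟨_, _, n3, n4, _⟩ := hN
  have key : ∀ v' w', BEdge n v' w' → 0 < zV n V v' w' → NB n v w ≤ NB n v' w' := by
    intro v' w' he' hz'
    have hs : v' ≠ BV.s := by
      rintro rfl; rw [zss he'] at hz'; exact lt_irrefl _ hz'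
    by_contra hlt
    push Not at hlt
    have a1 := n3 v w he
    have a2 := n3 v' w' ⟨he', hs⟩
    have a3 := n4 v' w' v w ⟨he', hs⟩ he hlt
    by_cases hX' : X v' w'
    · have := hmin _ _ (improving_B (pSpec_pos n) B D ⟨he', hs⟩ hX' hz').1
      omega
    · have := hmin _ _ (improving_A (pSpec_pos n) B D ⟨he', hs⟩ hX' hz').1
      omega
  refine ⟨he.1, hz, ?_, Or.inr fun w' h1 h2 => key v w' h1 h2⟩
  intro u hu hlt w' he'
  by_contra hz'
  push Not at hz'
  have a1 := key u w' he' hz'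
  have a2 := NB_mono he' he.1 hlt
  omega

theorem dantzig_step {n k : ℕ} (hn : 1 ≤ n)
    {π π' : DV → DV} (K : Kst n k π) (h : DantzigStep n (pSpec n) π π') : Kst n (k + 1) π' := by
  obtain ⟨σ, V, X, j, D, B, hI, hj⟩ := K
  obtain ⟨u, u', hi, hmax, rfl⟩ := h
  refine step_general hn D B hI hj hi ?_
  rintro v w rfl rfl he hX hz hc
  have key : ∀ v' w', BEdge n v' w' → 0 < zV n V v' w' →
      pSpec n v' * zV n V v' w' ≤ pSpec n v * zV n V v w := by
    intro v' w' he' hz'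
    have hs : v' ≠ BV.s := by
      rintro rfl; rw [zss he'] at hz'; exact lt_irrefl _ hz'
    rw [← hc]
    by_cases hX' : X v' w'
    · have a := improving_B (pSpec_pos n) B D ⟨he', hs⟩ hX' hz'
      rw [← a.2]; exact hmax _ _ a.1
    · have a := improving_A (pSpec_pos n) B D ⟨he', hs⟩ hX' hz'
      rw [← a.2]; exact hmax _ _ a.1
  refine ⟨he.1, hz, ?_, Or.inl ?_⟩
  · intro u hu hlt w' he'
    by_contra hz'
    push Not at hz'
    have a1 := key u w' he' hz'
    have a2 := cost_lt B he' hz' he.1 hlt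
    rw [abs_of_pos hz] at a2
    linarith
  · intro w' he'
    rcases le_or_gt (zV n V v w') 0 with h | h
    · linarith
    · exact le_of_mul_le_mul_left (key v w' he' h) (pSpec_pos n v)

/-! ### Largest Increase: values after a switch -/

theorem NV_t (n : ℕ) : NV n BV.t = 1 := rfl
theorem NV_s (n : ℕ) : NV n BV.s = 2 * n + 3 := rfl
theorem NV_a (n i : ℕ) : NV n (BV.a i) = 2 * i := rfl
theorem NV_b (n i : ℕ) : NV n (BV.b i) = 2 * i + 1 := rfl

theorem NV_aN {n j : ℕ} : 2 * j ≤ NV n (aN n j) := by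
  unfold aN; split_ifs <;> simp only [NV] <;> omega
theorem NV_bN {n j : ℕ} : 2 * j ≤ NV n (bN n j) := by
  unfold bN; split_ifs <;> simp only [NV] <;> omega
theorem NV_bN_le {n j : ℕ} : NV n (bN n j) ≤ 2 * j + 1 := by
  unfold bN; split_ifs <;> simp only [NV] <;> omega
theorem NV_le {n : ℕ} {q : BV} (h : IsBVertex n q) : 1 ≤ NV n q ∧ NV n q ≤ 2 * n + 3 := by
  cases q <;> simp only [NV, IsBVertex] at * <;> omega

theorem edge_up {n : ℕ} {q q' : BV} (he : BEdge n q q') :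
    (q' = BV.t ∧ rB n q q' = - cpot n q - 3 / 4) ∨ NV n q < NV n q' ∨ q = BV.s := by
  refine BEdge.elim (P := fun q q' =>
    (q' = BV.t ∧ rB n q q' = - cpot n q - 3 / 4) ∨ NV n q < NV n q' ∨ q = BV.s) he
    ?_ ?_ ?_ ?_ ?_ ?_ ?_ ?_
  · intro i h1 h2; right; left; simp only [NV]; omega
  · intro i h1 h2; right; left; simp only [NV]; omega
  · intro i h1 h2; right; left; have := NV_aN (n := n) (j := i + 1)
    simp only [NV_a, NV_b]; omega
  · intro i h1 h2; left; refine ⟨rfl, ?_⟩; rw [rB_at]; simp only [cpot]; ring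
  · intro i h1 h2; right; left; have := NV_bN (n := n) (j := i + 1)
    simp only [NV_a, NV_b]; omega
  · intro i h1 h2; right; left; have := NV_aN (n := n) (j := i + 1)
    simp only [NV_a, NV_b]; omega
  · right; left; simp only [NV]; omega
  · right; right; rfl

theorem edge_jump {n : ℕ} {q q' v : BV} (he : BEdge n q q') (hq : q ≠ BV.t)
    (hv : IsBVertex n v) (h1 : NV n q < NV n v) (h2 : NV n v < NV n q') :
    BEdge n v q' ∧ rB n q q' ≤ rB n v q' + cpot n v - cpot n q := by
  revert hq h1 h2
  refine BEdge.elim (P := fun q q' => q ≠ BV.t → NV n q < NV n v → NV n v < NV n q' →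
    BEdge n v q' ∧ rB n q q' ≤ rB n v q' + cpot n v - cpot n q) he
    ?_ ?_ ?_ ?_ ?_ ?_ ?_ ?_
  · intro i _ _ h; exact absurd rfl h
  · intro i _ _ _ h1 h2; simp only [NV] at h1 h2; omega
  · intro i hi hi' _ h1 h2
    have hp : (2:ℚ) ^ (i + 1) = 2 * 2 ^ i := by ring
    have hp2 := two_le_pow hi
    rw [rB_aa]
    by_cases hin : i = n
    · subst hin
      rw [aN_top] at h2 ⊢
      cases v with
      | t => simp only [NV] at h1; omega
      | s => simp only [NV] at h2; omega
      | d => refine ⟨edge_ds i, ?_⟩; simp only [rB, cpot]; linarith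
      | a k => have := hv.2; simp only [NV] at h1; omega
      | b k =>
        have : k = i := by have := hv.2; simp only [NV] at h1; omega
        subst this
        have e := edge_ba hi hi'
        have r := rB_ba k k (k + 1)
        rw [aN_top] at e r
        refine ⟨e, ?_⟩; rw [r]; simp only [cpot]; linarith
    · rw [aN_le (by omega)] at h2
      cases v with
      | t => simp only [NV] at h1; omega
      | s => simp only [NV] at h2; omega
      | d => simp only [NV] at h2; omega
      | a k => simp only [NV] at h1 h2; omega
      | b k =>
        have : k = i := by simp only [NV] at h1 h2; omega
        subst this
        refine ⟨edge_ba hi hi', ?_⟩; rw [rB_ba]; simp only [cpot]; linarith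
  · intro i _ _ _ h1 h2; simp only [NV] at h1 h2; omega
  · intro i hi hi' _ h1 h2
    have hp : (2:ℚ) ^ (i + 1) = 2 * 2 ^ i := by ring
    have hp2 := two_le_pow hi
    have hb := NV_bN_le (n := n) (j := i + 1)
    by_cases hin : i = n
    · subst hin
      rw [bN_top] at h2
      cases v <;> simp only [NV, IsBVertex] at h1 h2 hv <;> omega
    · rw [rB_bb, bN_le (by omega)] at *
      cases v with
      | t => simp only [NV] at h1; omega
      | s => simp only [NV] at h2; omega
      | d => simp only [NV] at h2; omega
      | b k => simp only [NV] at h1 h2; omega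
      | a k =>
        have : k = i + 1 := by simp only [NV] at h1 h2; omega
        subst this
        refine ⟨edge_ab (by omega) (by omega), ?_⟩; rw [rB_ab]; simp only [cpot]; linarith
  · intro i hi hi' _ h1 h2
    by_cases hin : i = n
    · subst hin
      rw [rB_ba, aN_top] at *
      have : v = BV.d := by
        cases v <;> simp only [NV, IsBVertex] at h1 h2 hv <;> first | rfl | omega
      subst this
      refine ⟨edge_ds i, ?_⟩; simp only [rB, cpot]; linarith
    · rw [aN_le (by omega)] at h2
      cases v <;> simp only [NV] at h1 h2 <;> omega
  · intro _ h1 h2; simp only [NV] at h1 h2; omega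
  · intro _ h1 h2; simp only [NV] at h1 h2; omega

/-- The vertex `v` has no improving switch and no travel edge beyond `v` is improving. -/
def Settled (n : ℕ) (V : BV → ℚ) (v : BV) : Prop :=
  OptAt n V v ∧ ∀ k, 1 ≤ k → k ≤ n → NV n v < 2 * k → V (BV.a k) ≤ V BV.t

section settle
variable {n : ℕ} {σ : BV → BV} {V V' : BV → ℚ} {u w : BV}

theorem delta_up (B : BS n σ V) (B' : BS n (Function.update σ u w) V') (hu : IsBVertex n u) :
    ∀ d q, IsBVertex n q → NV n u < NV n q → NV n q + d = 2 * n + 3 → V' q = V q ∨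
      (V' q - V q = V' BV.t - V BV.t ∧ V' q ≤ V' BV.t - cpot n q - 3 / 4) := by
  intro d
  induction d using Nat.strong_induction_on with
  | _ d ih =>
    intro q hq hlt hd
    have hne : q ≠ u := by rintro rfl; exact lt_irrefl _ hlt
    have b1 := B.bell q hq
    have b2 := B'.bell q hq
    rw [Function.update_of_ne hne] at b2
    have he := B.pol q hq
    rcases edge_up he with ⟨h1, h2⟩ | h | h
    · right
      rw [h1] at b1 b2 h2
      rw [h2] at b1 b2
      constructor <;> linarith
    · have hc := rB_le_cpot he
      have hn := NV_le he.tgt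
      rcases ih (2 * n + 3 - NV n (σ q)) (by omega) (σ q) he.tgt (by omega) (by omega) with h | h
      · left; linarith
      · right; constructor <;> linarith
    · left; rw [h, B.vs, B'.vs]

theorem delta_cases (B : BS n σ V) (B' : BS n (Function.update σ u w) V') (hu : IsBVertex n u)
    {q : BV} (hq : IsBVertex n q) (h : NV n u < NV n q) : V' q = V q ∨
      (V' q - V q = V' BV.t - V BV.t ∧ V' q ≤ V' BV.t - cpot n q - 3 / 4) :=
  delta_up B B' hu (2 * n + 3 - NV n q) q hq h (by have := NV_le hq; omega)

theorem reach_v (B : BS n σ V) (B' : BS n (Function.update σ u w) V') (hu : IsBVertex n u)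
    (hm : ∀ q, V q ≤ V' q) {v : BV} (hv : IsBVertex n v) (huv : NV n u < NV n v)
    (ho : OptAt n V v) :
    ∀ d q, IsBVertex n q → q ≠ BV.t → NV n q + d = NV n v →
      V' q ≤ cpot n v - cpot n q + V' v ∨ V' q ≤ V' BV.t - cpot n q - 3 / 4 := by
  intro d
  induction d using Nat.strong_induction_on with
  | _ d ih =>
    intro q hq hqt hd
    by_cases hqv : q = v
    · left; rw [hqv]; linarith
    have hne : NV n q ≠ NV n v := fun h => hqv (NV_inj hq hv h)
    have b2 := B'.bell q hq
    have he := B'.pol q hq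
    have hc := rB_le_cpot he
    generalize Function.update σ u w q = q' at b2 he hc
    rcases edge_up he with ⟨h1, h2⟩ | h | h
    · right
      rw [h1] at b2 h2
      linarith
    · rcases le_or_gt (NV n q') (NV n v) with hle | hgt
      · have hq't : q' ≠ BV.t := by
          rintro rfl
          have := (NV_le hq).1
          rw [NV_t] at h; omega
        rcases ih (NV n v - NV n q') (by omega) q' he.tgt hq't (by omega) with h | h
        · left; linarith
        · right; linarith
      · obtain ⟨e, hr⟩ := edge_jump he hqt hv (by omega) hgt
        have hz := ho q' e
        unfold zV at hz
        have hmv := hm v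
        rcases delta_cases B B' hu he.tgt (show NV n u < NV n q' by omega) with h | h
        · left; linarith
        · right; linarith [h.2]
    · subst h
      have := (NV_le hv).2
      rw [NV_s] at hd hne; omega

theorem reach_t (B : BS n σ V) (B' : BS n (Function.update σ u w) V') (hu : IsBVertex n u)
    (hm : ∀ q, V q ≤ V' q) {v : BV} (hv : IsBVertex n v) (huv : NV n u < NV n v)
    (hS : Settled n V v) : V' BV.t = V BV.t ∨ V' BV.t ≤ cpot n v + V' v := by
  have b2 := B'.bell BV.t trivial
  have he := B'.pol BV.t trivial
  generalize Function.update σ u w BV.t = q' at b2 he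
  obtain ⟨k, h1, h2, rfl⟩ := he.from_t
  rw [rB_ta] at b2
  have hc : 0 ≤ cpot n (BV.a k) := BS.cpot_nonneg he.tgt
  rcases le_or_gt (NV n (BV.a k)) (NV n v) with hle | hgt
  · rcases reach_v B B' hu hm hv huv hS.1 (NV n v - NV n (BV.a k)) (BV.a k) he.tgt (by simp)
      (by omega) with h | h
    · right; linarith
    · exfalso; linarith
  · have h3 := hS.2 k h1 h2 (by simpa only [NV] using hgt)
    rcases delta_cases B B' hu he.tgt (huv.trans hgt) with h | h
    · left
      have := hm BV.t
      linarith
    · exfalso; linarith [h.2]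

theorem settled_keep (B : BS n σ V) (B' : BS n (Function.update σ u w) V') (hu : IsBVertex n u)
    (hm : ∀ q, V q ≤ V' q) {v : BV} (hv : IsBVertex n v) (hs : v ≠ BV.s) (huv : NV n u < NV n v)
    (hS : Settled n V v) : Settled n V' v ∧
      ∀ w', BEdge n v w' → zV n V v w' < 0 → zV n V' v w' < 0 := by
  have hT := reach_t B B' hu hm hv huv hS
  have hmv := hm v
  have key : ∀ w', BEdge n v w' → zV n V' v w' ≤ zV n V v w' ∨ zV n V' v w' < 0 := by
    intro w' he
    unfold zV
    have hc := rB_le_cpot he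
    rcases edge_up he with ⟨h1, h2⟩ | h | h
    · rw [h2, h1]
      rcases hT with h | h
      · left; linarith
      · right; linarith
    · rcases delta_cases B B' hu he.tgt (huv.trans h) with h | h
      · left; linarith
      · rcases hT with h' | h'
        · left; linarith [h.1]
        · right; linarith [h.2]
    · exact absurd h hs
  refine ⟨⟨?_, ?_⟩, ?_⟩
  · intro w' he
    rcases key w' he with h | h
    · exact h.trans (hS.1 w' he)
    · exact h.le
  · intro k h1 h2 h3
    rcases delta_cases B B' hu (q := BV.a k) ⟨h1, h2⟩ (huv.trans (by simpa only [NV] using h3))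
      with h | h
    · have := hS.2 k h1 h2 h3
      have := hm BV.t
      linarith
    · have hc : 0 ≤ cpot n (BV.a k) := BS.cpot_nonneg (n := n) (u := BV.a k) ⟨h1, h2⟩
      linarith [h.2]
  · intro w' he hz
    rcases key w' he with h | h
    · exact h.trans_lt hz
    · exact h

open Classical in
theorem settled_new (B : BS n σ V) (B' : BS n (Function.update σ u w) V')
    (S : BS.Sw n σ V V' u w) (hs : u ≠ BV.s) (he : BEdge n u w) (hz : 0 < zV n V u w)
    (hlow : ∀ q, IsBVertex n q → NV n q < NV n u → OptAt n V q)
    (hbest : ∀ w', BEdge n u w' → zV n V u w' ≤ zV n V u w) (hm : ∀ q, V q ≤ V' q) :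
    Settled n V' u ∧ (∀ w', BEdge n u w' → zV n V u w' < 0 → zV n V' u w' < 0) ∧
      zV n V' u (σ u) < 0 := by
  have hu := he.src
  have e0 := S.pass u (Pass.self _ _)
  have key : ∀ w', BEdge n u w' →
      (zV n V' u w' = zV n V u w' ∧ zV n V u w' ≤ 0) ∨
      zV n V' u w' = zV n V u w' - zV n V u w := by
    intro w' he'
    by_cases hp : Pass σ u w'
    · left
      have h1 := S.pass w' hp
      have h2 := B.pass_le he'.tgt hp
      have h3 := rB_le_cpot he'
      constructor
      · rw [zV, h1, e0]; simp only [zV]; ring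
      · unfold zV; linarith
    · right
      have h1 := S.npass w' hp
      rw [zV, h1, e0]; simp only [zV]; ring
  have hopt : OptAt n V' u := by
    intro w' he'
    rcases key w' he' with h | h
    · linarith [h.1, h.2]
    · linarith [hbest w' he']
  refine ⟨⟨hopt, ?_⟩, ?_, ?_⟩
  · intro k h1 h2 h3
    by_cases hut : u = BV.t
    · subst hut
      have := hopt (BV.a k) (edge_ta h1 h2)
      rw [zV, rB_ta] at this; linarith
    · have ht : OptAt n V BV.t := by
        apply hlow BV.t trivial
        have := NV_le hu
        have h4 : NV n BV.t ≠ NV n u := fun h => hut (NV_inj (u := BV.t) (show IsBVertex n BV.t from trivial) hu h).symm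
        rw [NV_t] at h4 ⊢; omega
      have h5 := ht (BV.a k) (edge_ta h1 h2)
      rw [zV, rB_ta] at h5
      rcases delta_cases B B' hu (q := BV.a k) ⟨h1, h2⟩ (by simpa only [NV] using h3)
        with h | h
      · have := hm BV.t
        linarith
      · have hc : 0 ≤ cpot n (BV.a k) := BS.cpot_nonneg (n := n) (u := BV.a k) ⟨h1, h2⟩
        linarith [h.2]
  · intro w' he' hz'
    rcases key w' he' with h | h
    · linarith [h.1]
    · linarith
  · have h1 := S.npass (σ u) (B.no_cycle hu hs)
    have h2 := B.z_act hu
    have : zV n V' u (σ u) = zV n V u (σ u) - zV n V u w := by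
      rw [zV, h1, e0]; simp only [zV]; ring
    linarith

end settle

/-! ### Largest Increase: the objective -/

theorem mem_BVSet {n : ℕ} {v : BV} (h : IsBVertex n v) : v ∈ BVSet n := by
  unfold BVSet
  cases v <;> simp_all [IsBVertex]

theorem mem_base {n : ℕ} {v : BV} (h : IsBVertex n v) : DV.base v ∈ DAgentSet n := by
  classical
  unfold DAgentSet
  simp [mem_BVSet h]

theorem mem_x {n : ℕ} {v w : BV} (h : DEdgePair n v w) : DV.x v w ∈ DAgentSet n := by
  classical
  unfold DAgentSet
  simp [mem_BVSet h.1.src, mem_BVSet h.1.tgt, h]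

section obj
variable {n : ℕ} {p : BV → ℚ} {σ : BV → BV} {V : BV → ℚ} {X : BV → BV → Prop} {π : DV → DV}

theorem LIobj_single {p : BV → ℚ} {π π' : DV → DV} {q : DV} (hq : q ∈ DAgentSet n) (c : ℚ)
    (h1 : DVal n p π' q = DVal n p π q + c)
    (h2 : ∀ u, u ≠ q → DVal n p π' u = DVal n p π u) :
    LIobj n p π' = LIobj n p π + c := by
  have : ∑ u ∈ DAgentSet n, (DVal n p π' u - DVal n p π u) = c := by
    rw [Finset.sum_eq_single_of_mem q hq]
    · rw [h1]; ring
    · intro b _ hb; rw [h2 b hb]; ring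
  rw [Finset.sum_sub_distrib] at this
  unfold LIobj
  linarith

theorem LIobj_A (hp : ∀ v, 0 < p v) (B : BS n σ V) (D : DS n σ X π) {v w : BV}
    (he : DEdgePair n v w) (hX : ¬ X v w) :
    LIobj n p (Function.update π (DV.x v w) (DV.y v w)) = LIobj n p π + p v * zV n V v w := by
  have e1 := DVal_eq (p := p) (fun v => (hp v).ne') B D
  have e2 := DVal_eq (p := p) (fun v => (hp v).ne') B (DS_A D v w)
  apply LIobj_single (mem_x he)
  · rw [e1, e2, DW_x0 he hX, DW_x1 he (Or.inr ⟨rfl, rfl⟩)]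
  · intro u hu
    rw [e1, e2]
    cases u with
    | base a => rfl
    | y a b => rfl
    | z a b => rfl
    | x a b =>
      have h1 : ¬ (a = v ∧ b = w) := by simpa using hu
      have h2 : (X a b ∨ a = v ∧ b = w) ↔ X a b := by tauto
      by_cases hd : DEdgePair n a b
      · by_cases hx : X a b
        · rw [DW_x1 hd hx, DW_x1 hd (h2.2 hx)]
        · rw [DW_x0 hd hx, DW_x0 hd (fun h => hx (h2.1 h))]
      · simp [DW, hd]

theorem LIobj_R (hp : ∀ v, 0 < p v) (B : BS n σ V) (D : DS n σ X π) {v w : BV}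
    (he : DEdgePair n v w) (hX : X v w) (hw : w ≠ σ v) :
    LIobj n p (Function.update π (DV.x v w) (DV.base v)) = LIobj n p π + - (p v * zV n V v w) := by
  have e1 := DVal_eq (p := p) (fun v => (hp v).ne') B D
  have e2 := DVal_eq (p := p) (fun v => (hp v).ne') B (DS_R D v w hw)
  apply LIobj_single (mem_x he)
  · rw [e1, e2, DW_x1 he hX, DW_x0 he (by tauto)]; ring
  · intro u hu
    rw [e1, e2]
    cases u with
    | base a => rfl
    | y a b => rfl
    | z a b => rfl
    | x a b =>
      have h1 : ¬ (a = v ∧ b = w) := by simpa using hu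
      have h2 : (X a b ∧ ¬ (a = v ∧ b = w)) ↔ X a b := by tauto
      by_cases hd : DEdgePair n a b
      · by_cases hx : X a b
        · rw [DW_x1 hd hx, DW_x1 hd (h2.2 hx)]
        · rw [DW_x0 hd hx, DW_x0 hd (fun h => hx (h2.1 h))]
      · simp [DW, hd]

theorem Sw_mono {V' : BV → ℚ} {v w : BV} (S : BS.Sw n σ V V' v w) (hz : 0 < zV n V v w) :
    ∀ q, V q ≤ V' q := by
  classical
  intro q
  by_cases h : Pass σ v q
  · rw [S.pass q h]; linarith
  · rw [S.npass q h]

theorem LIobj_B (hp : ∀ v, 0 < p v) (hp1 : ∀ v, IsBVertex n v → p v ≤ 1)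
    (B : BS n σ V) (D : DS n σ X π) {v w : BV}
    (he : DEdgePair n v w) (hX : X v w) (hz : 0 < zV n V v w) :
    LIobj n p π + zV n V v w ≤ LIobj n p (Function.update π (DV.base v) (DV.x v w)) := by
  obtain ⟨V', B', S⟩ := B.switch he.1 hz
  have e1 := DVal_eq (p := p) (fun v => (hp v).ne') B D
  have e2 := DVal_eq (p := p) (fun v => (hp v).ne') B' (DS_B D v w he.2 hX)
  have hm := Sw_mono S hz
  have hc : ∀ a b, IsBVertex n a →
      V a + p a * zV n V a b ≤ V' a + p a * zV n V' a b := by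
    intro a b ha
    have h1 : 0 ≤ (1 - p a) * (V' a - V a) :=
      mul_nonneg (by linarith [hp1 a ha]) (by linarith [hm a])
    have h2 : 0 ≤ p a * (V' b - V b) := mul_nonneg (hp a).le (by linarith [hm b])
    have h3 : (V' a + p a * zV n V' a b) - (V a + p a * zV n V a b) =
      (1 - p a) * (V' a - V a) + p a * (V' b - V b) := by unfold zV; ring
    linarith
  have hmono : ∀ u ∈ DAgentSet n, 0 ≤ DW n p X V' u - DW n p X V u := by
    intro u _
    rw [sub_nonneg]
    cases u with
    | base a => simp only [DW]; split_ifs; exacts [hm a, le_rfl]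
    | x a b =>
      simp only [DW]; split_ifs with h1 h2
      · exact hc a b h1.1.src
      · exact hm a
      · exact le_rfl
    | y a b =>
      simp only [DW]; split_ifs with h1
      · exact hc a b h1.1.src
      · exact le_rfl
    | z a b =>
      simp only [DW]; split_ifs with h1
      · linarith [hm b]
      · exact le_rfl
  have h1 := Finset.single_le_sum hmono (mem_base he.1.src)
  rw [Finset.sum_sub_distrib, DW_base he.1.src, DW_base he.1.src, S.pass v (Pass.self _ _)] at h1
  unfold LIobj
  rw [e1, e2]
  linarith
end obj

def stI0 (n : ℕ) (σ : BV → BV) (V : BV → ℚ) (X : BV → BV → Prop) : Prop :=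
  ∀ v w, DEdgePair n v w → X v w → w ≠ σ v → zV n V v w < 0 ∧ Settled n V v

def stI1 (n : ℕ) (σ : BV → BV) (V : BV → ℚ) (X : BV → BV → Prop) : Prop :=
  ∃ v₀ w₀, DEdgePair n v₀ w₀ ∧ X v₀ w₀ ∧ Good n V v₀ w₀ ∧
    (∀ w', BEdge n v₀ w' → zV n V v₀ w' ≤ zV n V v₀ w₀) ∧
    ∀ v w, DEdgePair n v w → X v w → w ≠ σ v →
      (v = v₀ ∧ w = w₀) ∨ (zV n V v w < 0 ∧ Settled n V v ∧ NV n v₀ < NV n v)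

def LIst (n : ℕ) (k : ℕ) (π : DV → DV) : Prop :=
  ∃ σ V X j, DS n σ X π ∧ BS n σ V ∧ PhInv n j σ ∧ j ≤ k ∧ (stI0 n σ V X ∨ stI1 n σ V X)

theorem pSpec_le_one {n : ℕ} {v : BV} (h : IsBVertex n v) : pSpec n v ≤ 1 := by
  have h1 := pSpec_le h
  have h2 := pSpec_pos n v
  have h3 : (1:ℚ) ≤ 2 ^ (n + 5) := one_le_pow₀ (by norm_num)
  nlinarith

theorem li_step {n k : ℕ} (hn : 1 ≤ n) {π π' : DV → DV} (K : LIst n k π)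
    (h : LIStep n (pSpec n) π π') : LIst n (k + 1) π' := by
  obtain ⟨σ, V, X, j, D, B, hI, hj, hst⟩ := K
  obtain ⟨u, u', hi, hmax, rfl⟩ := h
  have hp := pSpec_pos n
  have hneS : ∀ v w, DEdgePair n v w → zV n V v w ≠ 0 → w ≠ σ v := by
    rintro v w he h rfl
    exact h (B.z_act he.1.src)
  rcases hst with h0 | ⟨v₀, w₀, he₀, hX₀, G₀, hb₀, hoth⟩
  · -- no pending switch
    obtain ⟨v, w, he, ⟨rfl, rfl, hX, hz, -⟩ | ⟨rfl, rfl, hX, hz, -⟩ | ⟨rfl, rfl, hX, hz, -⟩⟩ :=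
      improving_cases hp B D hi
    · have hnX : ∀ a b, BEdge n a b → 0 < zV n V a b → DEdgePair n a b ∧ ¬ X a b := by
        intro a b hab hzab
        have hs : a ≠ BV.s := by
          rintro rfl; rw [zss hab] at hzab; exact lt_irrefl _ hzab
        refine ⟨⟨hab, hs⟩, fun hXab => ?_⟩
        have := (h0 a b ⟨hab, hs⟩ hXab (hneS a b ⟨hab, hs⟩ hzab.ne')).1
        linarith
      have key : ∀ a b, BEdge n a b → 0 < zV n V a b →
          pSpec n a * zV n V a b ≤ pSpec n v * zV n V v w := by
        intro a b hab hzab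
        obtain ⟨h1, h2⟩ := hnX a b hab hzab
        have := hmax _ _ (improving_A hp B D h1 h2 hzab).1
        rw [LIobj_A hp B D h1 h2, LIobj_A hp B D he hX] at this
        linarith
      have keyR : ∀ a b, DEdgePair n a b → X a b → zV n V a b < 0 →
          - (pSpec n a * zV n V a b) ≤ pSpec n v * zV n V v w := by
        intro a b hab hXab hzab
        have hne := hneS a b hab hzab.ne
        have himp : DImproving n (pSpec n) π (DV.x a b) (DV.base a) := by
          refine ⟨Or.inl ⟨a, b, hab, Or.inr (Or.inl ⟨rfl, rfl⟩)⟩, ?_⟩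
          unfold zD
          rw [DVal_eq (fun v => (hp v).ne') B D, DW_x1 hab hXab, DW_base hab.1.src]
          have := mul_pos (hp a) (neg_pos.2 hzab)
          simp only [rD]; linarith
        have := hmax _ _ himp
        rw [LIobj_R hp B D hab hXab hne, LIobj_A hp B D he hX] at this
        linarith
      have hbest : ∀ w', BEdge n v w' → zV n V v w' ≤ zV n V v w := by
        intro w' he'
        rcases le_or_gt (zV n V v w') 0 with h | h
        · linarith
        · exact le_of_mul_le_mul_left (key v w' he' h) (hp v)
      have G : Good n V v w := by
        refine ⟨he.1, hz, ?_, Or.inl hbest⟩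
        intro a ha hlt b hab
        by_contra hz'
        push Not at hz'
        have a1 := key a b hab hz'
        have a2 := cost_lt B hab hz' he.1 hlt
        rw [abs_of_pos hz] at a2
        linarith
      refine ⟨σ, V, _, j, DS_A D v w, B, hI, by omega, Or.inr
        ⟨v, w, he, Or.inr ⟨rfl, rfl⟩, G, hbest, ?_⟩⟩
      intro a b hab hXab hne
      rcases hXab with hXab | hXab
      · right
        obtain ⟨hz', hS⟩ := h0 a b hab hXab hne
        refine ⟨hz', hS, ?_⟩
        rcases lt_trichotomy (NV n v) (NV n a) with hlt | heq | hgt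
        · exact hlt
        · exfalso
          have := NV_inj he.1.src hab.1.src heq
          subst this
          have := hS.1 w he.1
          linarith
        · exfalso
          have a1 := keyR a b hab hXab hz'
          have h1 : (1:ℚ) / 4 ≤ - zV n V a b := by
            obtain ⟨m, hm⟩ := B.z_quarter hab.1
            rw [hm] at hz' ⊢
            have : (m:ℚ) < 0 := by linarith
            have : m < 0 := by exact_mod_cast this
            have : m ≤ -1 := by omega
            have : (m:ℚ) ≤ -1 := by exact_mod_cast this
            linarith
          have h2 := B.abs_z he.1
          have h3 := pSpec_lt hgt
          have h6 : (2:ℚ) ^ (n + 5) = 8 * 2 ^ (n + 2) := by ring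
          rw [abs_of_pos hz] at h2
          have h7 : pSpec n v * zV n V v w ≤ pSpec n v * 2 ^ (n + 2) :=
            mul_le_mul_of_nonneg_left h2 (hp v).le
          have h8 : pSpec n a * (1 / 4) ≤ pSpec n a * (- zV n V a b) :=
            mul_le_mul_of_nonneg_left h1 (hp a).le
          have h9 := hp a
          rw [h6] at h3
          linarith
      · left; exact hXab
    · exfalso
      have := (h0 v w he hX (hneS v w he hz.ne')).1
      linarith
    · refine ⟨σ, V, _, j, DS_R D v w (hneS v w he hz.ne), B, hI, by omega, Or.inl ?_⟩
      intro a b hab hXab hne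
      exact h0 a b hab hXab.1 hne
  · -- the pending switch has to be applied
    have hz₀ := G₀.pos
    have gain := hmax _ _ (improving_B hp B D he₀ hX₀ hz₀).1
    have gB := LIobj_B hp (fun v => pSpec_le_one) B D he₀ hX₀ hz₀
    have g4 := B.z_pos he₀.1 hz₀
    obtain ⟨v, w, he, ⟨rfl, rfl, hX, hz, -⟩ | ⟨rfl, rfl, hX, hz, -⟩ | ⟨rfl, rfl, hX, hz, -⟩⟩ :=
      improving_cases hp B D hi
    · exfalso
      have h1 := cost_small B he.1
      rw [LIobj_A hp B D he hX] at gain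
      rw [abs_of_pos hz] at h1
      linarith
    · rcases hoth v w he hX (hneS v w he hz.ne') with ⟨rfl, rfl⟩ | h
      · obtain ⟨V', B', S⟩ := B.switch he.1 hz
        have hm := Sw_mono S hz
        refine ⟨_, V', X, j + 1, DS_B D v w he.2 hX, B', good_step hn B hI G₀, by omega,
          Or.inl ?_⟩
        obtain ⟨n1, n2, n3⟩ := settled_new B B' S he.2 he.1 hz G₀.low hb₀ hm
        intro a b hab hXab hne
        by_cases hav : a = v
        · subst hav
          rw [Function.update_self] at hne
          refine ⟨?_, n1⟩
          by_cases hb : b = σ a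
          · rw [hb]; exact n3
          · rcases hoth a b hab hXab hb with h | h
            · exact absurd h.2 hne
            · exact n2 b hab.1 h.1
        · rw [Function.update_of_ne hav] at hne
          rcases hoth a b hab hXab hne with h | ⟨h1, h2, h3⟩
          · exact absurd h.1 hav
          · have := settled_keep B B' he.1.src hm hab.1.src hab.2 h3 h2
            exact ⟨this.2 b hab.1 h1, this.1⟩
      · linarith [h.1]
    · exfalso
      have h1 := cost_small B he.1
      rw [LIobj_R hp B D he hX (hneS v w he hz.ne)] at gain
      rw [abs_of_neg hz] at h1
      linarith

theorem li_run {n : ℕ} (hn : 1 ≤ n)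
    (f : ℕ → (DV → DV)) (m : ℕ) (h0 : f 0 = twin (pi0 n))
    (hs : ∀ k < m, LIStep n (pSpec n) (f k) (f (k + 1)))
    (ht : ∀ u u', ¬ DImproving n (pSpec n) (f m) u u') : 2 ^ n - 1 ≤ m := by
  have : ∀ k, k ≤ m → LIst n k (f k) := by
    intro k
    induction k with
    | zero =>
      intro _; rw [h0]
      refine ⟨pi0 n, fun _ => 0, _, 0, DS_init n _, BS_init n hn, PhInv.init, le_rfl, Or.inl ?_⟩
      intro v w _ h1 h2
      exact absurd h1 h2
    | succ k ih => intro hk; exact li_step hn (ih (by omega)) (hs k (by omega))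
  obtain ⟨σ, V, X, j, D, B, hI, hj, _⟩ := this m le_rfl
  exact Kst_term hn ⟨σ, V, X, j, D, B, hI, hj⟩ ht

/-- With probabilities `p_v = 2^{-𝒩_V(v)(n+5)}`, each of Bland's, Dantzig's and the Largest
Increase policy iteration started at the twin policy of `π_0` performs at least `2^n - 1`
improving switches before terminating. -/
theorem stmt0 (n : ℕ) (hn : 1 ≤ n) :
    (∀ N : DV → DV → ℕ, IsDBlandNumbering n N →
      ∀ (f : ℕ → (DV → DV)) (m : ℕ), f 0 = twin (pi0 n) →
        (∀ k < m, IsBlandStepD n (pSpec n) N (f k) (f (k + 1))) →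
        (∀ u u', ¬ DImproving n (pSpec n) (f m) u u') → 2 ^ n - 1 ≤ m) ∧
    (∀ (f : ℕ → (DV → DV)) (m : ℕ), f 0 = twin (pi0 n) →
        (∀ k < m, DantzigStep n (pSpec n) (f k) (f (k + 1))) →
        (∀ u u', ¬ DImproving n (pSpec n) (f m) u u') → 2 ^ n - 1 ≤ m) ∧
    (∀ (f : ℕ → (DV → DV)) (m : ℕ), f 0 = twin (pi0 n) →
        (∀ k < m, LIStep n (pSpec n) (f k) (f (k + 1))) →
        (∀ u u', ¬ DImproving n (pSpec n) (f m) u u') → 2 ^ n - 1 ≤ m) := by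
  exact ⟨fun N hN f m h0 hs ht => run_bound hn (IsBlandStepD n (pSpec n) N)
      (fun _ _ _ K h => bland_step hn hN K h) f m h0 hs ht,
    fun f m h0 hs ht => run_bound hn (DantzigStep n (pSpec n))
      (fun _ _ _ K h => dantzig_step hn K h) f m h0 hs ht,
    fun f m h0 hs ht => li_run hn f m h0 hs ht⟩
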